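/- arXiv:2212.13239 — 4 statements merged into one kernel-verified Lean document; each statement's English description precedes it below -/
import Mathlib

section
/- The Gaussian projection is not globally Lipschitz in the weighted total variation metric: for 0 < ε ≤ 1/2 let μ₁ = N(0, ε) on R and μ₂ = ε δ_{−1} + (1 − 2ε) μ₁ + ε δ_{1}. Then d_g(μ₁, μ₂) ≤ 8ε, while d_g(Gμ₁, Gμ₂) ≥ d_TV(N(0,1), N(0,2)) > 0, where d_TV is the (unweighted) total variation distance; consequently d_g(Gμ₁, Gμ₂)/d_g(μ₁, μ₂) → ∞ as ε → 0. -/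
open MeasureTheory Matrix
open scoped BigOperators ENNReal

noncomputable section

namespace EnKF

/-- Points of `ℝ^n`, with Lebesgue measure as `volume`. -/
abbrev Vec (n : ℕ) := Fin n → ℝ

/-- Euclidean norm of a finitely indexed real vector. -/
def enorm {ι : Type*} [Fintype ι] (v : ι → ℝ) : ℝ := Real.sqrt (∑ i, v i ^ 2)

/-- The weight function `g(v) = 1 + |v|²` on `ℝ^n`. -/
def gw {n : ℕ} (v : Vec n) : ℝ := 1 + ∑ i, v i ^ 2

/-- The weight function `g(u, y) = 1 + |u|² + |y|²` on `ℝ^d × ℝ^K`. -/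
def gw2 {d K : ℕ} (p : Vec d × Vec K) : ℝ := 1 + (∑ i, p.1 i ^ 2) + (∑ j, p.2 j ^ 2)

/-- Weighted total-variation metric with weight `G`:
`d_G(μ₁, μ₂) = sup { |μ₁[f] − μ₂[f]| : f measurable, |f| ≤ G pointwise }`. -/
def dG {E : Type*} [MeasurableSpace E] (G : E → ℝ) (μ₁ μ₂ : Measure E) : ℝ :=
  ⨆ f : {f : E → ℝ // Measurable f ∧ ∀ v, |f v| ≤ G v},
    |(∫ v, f.1 v ∂μ₁) - ∫ v, f.1 v ∂μ₂|

/-- Loewner order on symmetric matrices: `loe A B ↔ A ≼ B`. -/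
def loe {ι : Type*} [Fintype ι] (A B : Matrix ι ι ℝ) : Prop := (B - A).PosSemidef

/-- Mean vector of a measure on `ℝ^n`. -/
def mean {n : ℕ} (μ : Measure (Vec n)) : Vec n := fun i => ∫ v, v i ∂μ

/-- Covariance matrix of a measure on `ℝ^n`. -/
def cov {n : ℕ} (μ : Measure (Vec n)) : Matrix (Fin n) (Fin n) ℝ :=
  Matrix.of fun i j => ∫ v, (v i - mean μ i) * (v j - mean μ j) ∂μ

/-- Density of the Gaussian `N(m, S)` on `ℝ^n`. -/
def gaussDensity {n : ℕ} (m : Vec n) (S : Matrix (Fin n) (Fin n) ℝ) (x : Vec n) : ℝ :=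
  (Real.sqrt ((2 * Real.pi) ^ n * S.det))⁻¹ *
    Real.exp (-(1 / 2) * ((x - m) ⬝ᵥ (S⁻¹ *ᵥ (x - m))))

/-- The (nondegenerate) Gaussian measure `N(m, S)` on `ℝ^n`. -/
def gauss {n : ℕ} (m : Vec n) (S : Matrix (Fin n) (Fin n) ℝ) : Measure (Vec n) :=
  volume.withDensity fun x => ENNReal.ofReal (gaussDensity m S x)

/-- Gaussian projection `G` on `ℝ^n`: the Gaussian with the same mean and covariance. -/
def Gproj {n : ℕ} (μ : Measure (Vec n)) : Measure (Vec n) := gauss (mean μ) (cov μ)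

variable {d K : ℕ}

/-- Mean of the first (state) marginal of a measure on `ℝ^d × ℝ^K`. -/
def meanU (π : Measure (Vec d × Vec K)) : Vec d := fun i => ∫ p, p.1 i ∂π

/-- Mean of the second (data) marginal of a measure on `ℝ^d × ℝ^K`. -/
def meanY (π : Measure (Vec d × Vec K)) : Vec K := fun j => ∫ p, p.2 j ∂π

/-- Block `C^{uu}` of the covariance of a measure on `ℝ^d × ℝ^K`. -/
def covUU (π : Measure (Vec d × Vec K)) : Matrix (Fin d) (Fin d) ℝ :=
  Matrix.of fun i j => ∫ p, (p.1 i - meanU π i) * (p.1 j - meanU π j) ∂π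

/-- Block `C^{uy}` of the covariance of a measure on `ℝ^d × ℝ^K`. -/
def covUY (π : Measure (Vec d × Vec K)) : Matrix (Fin d) (Fin K) ℝ :=
  Matrix.of fun i j => ∫ p, (p.1 i - meanU π i) * (p.2 j - meanY π j) ∂π

/-- Block `C^{yy}` of the covariance of a measure on `ℝ^d × ℝ^K`. -/
def covYY (π : Measure (Vec d × Vec K)) : Matrix (Fin K) (Fin K) ℝ :=
  Matrix.of fun i j => ∫ p, (p.2 i - meanY π i) * (p.2 j - meanY π j) ∂π

/-- Full covariance matrix of a measure on `ℝ^d × ℝ^K`, in block form. -/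
def covBlock (π : Measure (Vec d × Vec K)) : Matrix (Fin d ⊕ Fin K) (Fin d ⊕ Fin K) ℝ :=
  Matrix.fromBlocks (covUU π) (covUY π) (covUY π)ᵀ (covYY π)

/-- Density of a Gaussian on `ℝ^d × ℝ^K` with mean `(mu, my)` and covariance `S`. -/
def jointGaussDensity (mu : Vec d) (my : Vec K)
    (S : Matrix (Fin d ⊕ Fin K) (Fin d ⊕ Fin K) ℝ) (p : Vec d × Vec K) : ℝ :=
  (Real.sqrt ((2 * Real.pi) ^ (d + K) * S.det))⁻¹ *
    Real.exp (-(1 / 2) *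
      (Sum.elim (p.1 - mu) (p.2 - my) ⬝ᵥ (S⁻¹ *ᵥ Sum.elim (p.1 - mu) (p.2 - my))))

/-- Gaussian measure on `ℝ^d × ℝ^K` with mean `(mu, my)` and covariance `S`. -/
def jointGauss (mu : Vec d) (my : Vec K)
    (S : Matrix (Fin d ⊕ Fin K) (Fin d ⊕ Fin K) ℝ) : Measure (Vec d × Vec K) :=
  volume.withDensity fun p => ENNReal.ofReal (jointGaussDensity mu my S p)

/-- Density of the Gaussian projection of a measure on `ℝ^d × ℝ^K`. -/
def gProjDensity2 (π : Measure (Vec d × Vec K)) : Vec d × Vec K → ℝ :=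
  jointGaussDensity (meanU π) (meanY π) (covBlock π)

/-- Gaussian projection on `ℝ^d × ℝ^K`. -/
def Gproj2 (π : Measure (Vec d × Vec K)) : Measure (Vec d × Vec K) :=
  jointGauss (meanU π) (meanY π) (covBlock π)

/-- Prediction operator `P`: the law of `Ψ(V) + ξ`, `V ∼ μ` independent of `ξ ∼ N(0, Σ)`. -/
def Pop (Psi : Vec d → Vec d) (Sig : Matrix (Fin d) (Fin d) ℝ)
    (μ : Measure (Vec d)) : Measure (Vec d) :=
  (μ.prod (gauss 0 Sig)).map fun p => Psi p.1 + p.2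

/-- Lifting operator `Q`: the law of `(U, H(U) + η)`, `U ∼ μ` independent of `η ∼ N(0, Γ)`. -/
def Qop (H : Vec d → Vec K) (Gam : Matrix (Fin K) (Fin K) ℝ)
    (μ : Measure (Vec d)) : Measure (Vec d × Vec K) :=
  (μ.prod (gauss 0 Gam)).map fun p => (p.1, H p.1 + p.2)

/-- Lebesgue density of `Pμ`. -/
def predDensity (Psi : Vec d → Vec d) (Sig : Matrix (Fin d) (Fin d) ℝ)
    (μ : Measure (Vec d)) (u : Vec d) : ℝ :=
  (Real.sqrt ((2 * Real.pi) ^ d * Sig.det))⁻¹ *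
    ∫ v, Real.exp (-(1 / 2) * ((u - Psi v) ⬝ᵥ (Sig⁻¹ *ᵥ (u - Psi v)))) ∂μ

/-- Lebesgue density of `QPμ` on `ℝ^d × ℝ^K`. -/
def qpDensity (Psi : Vec d → Vec d) (Sig : Matrix (Fin d) (Fin d) ℝ)
    (H : Vec d → Vec K) (Gam : Matrix (Fin K) (Fin K) ℝ)
    (μ : Measure (Vec d)) (p : Vec d × Vec K) : ℝ :=
  predDensity Psi Sig μ p.1 * gaussDensity (H p.1) Gam p.2

/-- Conditioning operator `B` applied to a (joint) density `f` and a datum `y†`: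
the measure on `ℝ^d` with density `u ↦ f(u, y†) / ∫ f(U, y†) dU`. -/
def condM (f : Vec d × Vec K → ℝ) (ydag : Vec K) : Measure (Vec d) :=
  volume.withDensity fun u => ENNReal.ofReal (f (u, ydag) / ∫ U, f (U, ydag))

/-- Kalman transport operator `T`: the pushforward of `π` under
`(u, y) ↦ u + C^{uy}(π) C^{yy}(π)⁻¹ (y† − y)`. -/
def Top (ydag : Vec K) (π : Measure (Vec d × Vec K)) : Measure (Vec d) :=
  π.map fun p => p.1 + covUY π *ᵥ ((covYY π)⁻¹ *ᵥ (ydag - p.2))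

/-- Operator (spectral) norm of a real matrix. -/
def opNorm {ι : Type*} [Fintype ι] {κ : Type*} [Fintype κ] (A : Matrix ι κ ℝ) : ℝ :=
  ⨆ x : {x : κ → ℝ // ∑ i, x i ^ 2 ≤ 1}, enorm (A *ᵥ x.1)

/-- Frobenius norm of a real matrix. -/
def frobNorm {ι κ : Type*} [Fintype ι] [Fintype κ] (A : Matrix ι κ ℝ) : ℝ :=
  Real.sqrt (∑ i, ∑ j, A i j ^ 2)

/-- Weighted norm `|x|_S = |S^{-1/2} x|`, i.e. `√(xᵀ S⁻¹ x)`. -/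
def wnorm {n : ℕ} (S : Matrix (Fin n) (Fin n) ℝ) (x : Vec n) : ℝ :=
  Real.sqrt (x ⬝ᵥ (S⁻¹ *ᵥ x))

/-- The set `𝒫_R(ℝ^n)` of probability measures with `|M(μ)| ≤ R` and
`R⁻² I ≼ C(μ) ≼ R² I`. -/
def PR (n : ℕ) (R : ℝ) : Set (Measure (Vec n)) :=
  {μ | IsProbabilityMeasure μ ∧ enorm (mean μ) ≤ R ∧
    loe ((R ^ 2)⁻¹ • 1) (cov μ) ∧ loe (cov μ) (R ^ 2 • 1)}

/-- The set `𝒫_R(ℝ^d × ℝ^K)`. -/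
def PR2 (d K : ℕ) (R : ℝ) : Set (Measure (Vec d × Vec K)) :=
  {π | IsProbabilityMeasure π ∧ enorm (Sum.elim (meanU π) (meanY π)) ≤ R ∧
    loe ((R ^ 2)⁻¹ • 1) (covBlock π) ∧ loe (covBlock π) (R ^ 2 • 1)}

/-- Smallest eigenvalue of a symmetric matrix (Rayleigh quotient form). -/
def lambdaMin {ι : Type*} [Fintype ι] (A : Matrix ι ι ℝ) : ℝ :=
  ⨅ x : {x : ι → ℝ // ∑ i, x i ^ 2 = 1}, x.1 ⬝ᵥ (A *ᵥ x.1)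

/-- Kullback–Leibler divergence `KL(μ₁ ‖ μ₂) = ∫ (dμ₁/dμ₂) log (dμ₁/dμ₂) dμ₂`. -/
def kl {E : Type*} [MeasurableSpace E] (μ₁ μ₂ : Measure E) : ℝ :=
  ∫ v, ((μ₁.rnDeriv μ₂ v).toReal * Real.log (μ₁.rnDeriv μ₂ v).toReal) ∂μ₂


/-- Weight `g(x) = 1 + x²` on `ℝ`. -/
def g1 (x : ℝ) : ℝ := 1 + x ^ 2

/-- One-dimensional Gaussian `N(m, s)` (with variance `s > 0`), as a measure on `ℝ`. -/
def gauss1 (m s : ℝ) : Measure ℝ :=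
  volume.withDensity fun x =>
    ENNReal.ofReal ((Real.sqrt (2 * Real.pi * s))⁻¹ * Real.exp (-(x - m) ^ 2 / (2 * s)))

/-- Mean of a measure on `ℝ`. -/
def mean1 (μ : Measure ℝ) : ℝ := ∫ x, x ∂μ

/-- Variance of a measure on `ℝ`. -/
def var1 (μ : Measure ℝ) : ℝ := ∫ x, (x - mean1 μ) ^ 2 ∂μ

/-- Gaussian projection on `ℝ`. -/
def Gproj1 (μ : Measure ℝ) : Measure ℝ := gauss1 (mean1 μ) (var1 μ)

/-- The counterexample measures: `μ₁ = N(0, ε)`. -/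
def mu1 (ε : ℝ) : Measure ℝ := gauss1 0 ε

/-- The counterexample measures: `μ₂ = ε δ_{-1} + (1 − 2ε) μ₁ + ε δ_1`. -/
def mu2 (ε : ℝ) : Measure ℝ :=
  ENNReal.ofReal ε • Measure.dirac (-1 : ℝ) + ENNReal.ofReal (1 - 2 * ε) • mu1 ε +
    ENNReal.ofReal ε • Measure.dirac (1 : ℝ)

open ProbabilityTheory

theorem gauss1_eq_gaussianReal (m : ℝ) {s : ℝ} (hs : 0 < s) :
    gauss1 m s = gaussianReal m s.toNNReal := by
  rw [gaussianReal_of_var_ne_zero m (Real.toNNReal_pos.2 hs).ne', gauss1, gaussianPDF_def,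
    gaussianPDFReal_def, Real.coe_toNNReal s hs.le]

theorem isProbabilityMeasure_gauss1 (m : ℝ) {s : ℝ} (hs : 0 < s) :
    IsProbabilityMeasure (gauss1 m s) := by
  rw [gauss1_eq_gaussianReal m hs]
  infer_instance

theorem integrable_id_gauss1 (m : ℝ) {s : ℝ} (hs : 0 < s) :
    Integrable (fun x => x) (gauss1 m s) := by
  rw [gauss1_eq_gaussianReal m hs]
  exact (memLp_id_gaussianReal 1).integrable (by simp)

theorem integrable_sq_gauss1 (m : ℝ) {s : ℝ} (hs : 0 < s) :
    Integrable (fun x => x ^ 2) (gauss1 m s) := by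
  rw [gauss1_eq_gaussianReal m hs]
  exact (memLp_id_gaussianReal 2).integrable_sq

theorem integral_id_gauss1 (m : ℝ) {s : ℝ} (hs : 0 < s) : ∫ x, x ∂gauss1 m s = m := by
  rw [gauss1_eq_gaussianReal m hs, integral_id_gaussianReal]

theorem integral_sq_gauss1 {s : ℝ} (hs : 0 < s) : ∫ x, x ^ 2 ∂gauss1 0 s = s := by
  have h := variance_fun_id_gaussianReal (μ := 0) (v := s.toNNReal)
  rw [variance_eq_integral measurable_id'.aemeasurable] at h
  simpa [← gauss1_eq_gaussianReal 0 hs, integral_id_gauss1 0 hs, hs.le] using h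

theorem integrable_g1_gauss1 (m : ℝ) {s : ℝ} (hs : 0 < s) : Integrable g1 (gauss1 m s) := by
  have := isProbabilityMeasure_gauss1 m hs
  exact (integrable_const 1).add (integrable_sq_gauss1 m hs)

theorem integral_g1_gauss1 {s : ℝ} (hs : 0 < s) : ∫ x, g1 x ∂gauss1 0 s = 1 + s := by
  have := isProbabilityMeasure_gauss1 0 hs
  simp only [g1]
  rw [integral_add (integrable_const 1) (integrable_sq_gauss1 0 hs), integral_sq_gauss1 hs]
  simp

/-- Integrals against `μ₂` decompose along the mixture. -/
theorem integral_mu2 {ε : ℝ} (h0 : 0 < ε) (h1 : ε ≤ 1 / 2) {f : ℝ → ℝ}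
    (hf : Integrable f (mu1 ε)) :
    ∫ x, f x ∂mu2 ε = ε * f (-1) + (1 - 2 * ε) * ∫ x, f x ∂mu1 ε + ε * f 1 := by
  have hd (a : ℝ) : Integrable f (ENNReal.ofReal ε • Measure.dirac a) :=
    (integrable_dirac (by simp)).smul_measure (by simp)
  have hm : Integrable f (ENNReal.ofReal (1 - 2 * ε) • mu1 ε) := hf.smul_measure (by simp)
  rw [mu2, integral_add_measure ((hd _).add_measure hm) (hd _),
    integral_add_measure (hd _) hm]
  simp only [integral_smul_measure, integral_dirac, smul_eq_mul]
  rw [ENNReal.toReal_ofReal h0.le, ENNReal.toReal_ofReal (by linarith)]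

theorem integrable_mu2 {ε : ℝ} {f : ℝ → ℝ} (hf : Integrable f (mu1 ε)) :
    Integrable f (mu2 ε) := by
  have hd (a : ℝ) : Integrable f (ENNReal.ofReal ε • Measure.dirac a) :=
    (integrable_dirac (by simp)).smul_measure (by simp)
  exact ((hd _).add_measure (hf.smul_measure (by simp))).add_measure (hd _)

theorem mean1_mu1 {ε : ℝ} (h0 : 0 < ε) : mean1 (mu1 ε) = 0 := integral_id_gauss1 0 h0

theorem var1_mu1 {ε : ℝ} (h0 : 0 < ε) : var1 (mu1 ε) = ε := by
  simp only [var1, mean1_mu1 h0, sub_zero]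
  exact integral_sq_gauss1 h0

theorem mean1_mu2 {ε : ℝ} (h0 : 0 < ε) (h1 : ε ≤ 1 / 2) : mean1 (mu2 ε) = 0 := by
  have h := mean1_mu1 h0
  rw [mean1] at h ⊢
  rw [integral_mu2 h0 h1 (integrable_id_gauss1 0 h0), h]
  ring

theorem var1_mu2 {ε : ℝ} (h0 : 0 < ε) (h1 : ε ≤ 1 / 2) :
    var1 (mu2 ε) = (3 - 2 * ε) * ε := by
  have h := integral_mu2 h0 h1 (integrable_sq_gauss1 0 h0)
  rw [mu1, integral_sq_gauss1 h0] at h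
  simp only [var1, mean1_mu2 h0 h1, sub_zero, h]
  ring

theorem abs_integral_le_of_abs_le {E : Type*} [MeasurableSpace E] {G f : E → ℝ} {μ : Measure E}
    (hG : Integrable G μ) (hf : ∀ v, |f v| ≤ G v) : |∫ v, f v ∂μ| ≤ ∫ v, G v ∂μ := by
  rw [← Real.norm_eq_abs]
  exact norm_integral_le_of_norm_le hG (Filter.Eventually.of_forall hf)

/-- Each admissible test function gives a lower bound of the weighted total variation. -/
theorem le_dG {E : Type*} [MeasurableSpace E] {G : E → ℝ} {μ ν : Measure E}
    (hμ : Integrable G μ) (hν : Integrable G ν) {f : E → ℝ} (hf : Measurable f)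
    (hfG : ∀ v, |f v| ≤ G v) : |(∫ v, f v ∂μ) - ∫ v, f v ∂ν| ≤ dG G μ ν := by
  refine le_ciSup (f := fun f : {f : E → ℝ // Measurable f ∧ ∀ v, |f v| ≤ G v} =>
    |(∫ v, f.1 v ∂μ) - ∫ v, f.1 v ∂ν|) ⟨(∫ v, G v ∂μ) + ∫ v, G v ∂ν, ?_⟩ ⟨f, hf, hfG⟩
  rintro _ ⟨⟨k, -, hk⟩, rfl⟩
  exact (abs_sub _ _).trans
    (add_le_add (abs_integral_le_of_abs_le hμ hk) (abs_integral_le_of_abs_le hν hk))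

theorem dG_le {E : Type*} [MeasurableSpace E] {G : E → ℝ} (hG : ∀ v, 0 ≤ G v)
    {μ ν : Measure E} {c : ℝ}
    (h : ∀ f : E → ℝ, Measurable f → (∀ v, |f v| ≤ G v) →
      |(∫ v, f v ∂μ) - ∫ v, f v ∂ν| ≤ c) : dG G μ ν ≤ c := by
  have : Nonempty {f : E → ℝ // Measurable f ∧ ∀ v, |f v| ≤ G v} :=
    ⟨⟨0, measurable_zero, by simpa using hG⟩⟩
  exact ciSup_le fun f => h f.1 f.2.1 f.2.2

theorem g1_nonneg (x : ℝ) : 0 ≤ g1 x := by unfold g1; positivity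

theorem one_le_g1 (x : ℝ) : 1 ≤ g1 x := by unfold g1; nlinarith [sq_nonneg x]

theorem dG_mu1_mu2_le {ε : ℝ} (h0 : 0 < ε) (h1 : ε ≤ 1 / 2) :
    dG g1 (mu1 ε) (mu2 ε) ≤ 8 * ε := by
  refine dG_le g1_nonneg fun f hf hfg => ?_
  have hg : Integrable g1 (mu1 ε) := integrable_g1_gauss1 0 h0
  rw [integral_mu2 h0 h1
    (hg.mono' hf.aestronglyMeasurable (Filter.Eventually.of_forall hfg))]
  have hI : |∫ x, f x ∂mu1 ε| ≤ 1 + ε :=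
    (abs_integral_le_of_abs_le hg hfg).trans_eq (integral_g1_gauss1 h0)
  have hl := hfg (-1)
  have hr := hfg 1
  norm_num [g1] at hl hr
  rw [abs_le] at hI hl hr ⊢
  constructor <;> nlinarith

theorem le_dG_mu1_mu2 {ε : ℝ} (h0 : 0 < ε) (h1 : ε ≤ 1 / 2) :
    ε ≤ dG g1 (mu1 ε) (mu2 ε) := by
  have hg : Integrable g1 (mu1 ε) := integrable_g1_gauss1 0 h0
  have hm : Measurable (({1} : Set ℝ).indicator fun _ => (1 : ℝ)) :=
    measurable_const.indicator (measurableSet_singleton 1)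
  have hb (x : ℝ) : |({1} : Set ℝ).indicator (fun _ => (1 : ℝ)) x| ≤ g1 x := by
    refine le_trans ?_ (one_le_g1 x)
    by_cases hx : x = 1 <;> simp [Set.indicator, hx]
  have h := le_dG hg (integrable_mu2 hg) hm hb
  rw [integral_mu2 h0 h1
    (hg.mono' hm.aestronglyMeasurable (Filter.Eventually.of_forall hb))] at h
  have hz : ∫ x, ({1} : Set ℝ).indicator (fun _ => (1 : ℝ)) x ∂mu1 ε = 0 := by
    rw [integral_indicator_const _ (measurableSet_singleton 1)]
    simp [mu1, gauss1, Measure.real, withDensity_absolutelyContinuous _ _ Real.volume_singleton]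
  rw [hz] at h
  norm_num [Set.indicator] at h
  exact (le_abs_self ε).trans h

/-- The test function equal to `1` on `{x² ≤ c}` and to `-1` elsewhere. -/
def signBall (c x : ℝ) : ℝ := if x ^ 2 ≤ c then 1 else -1

theorem measurable_signBall (c : ℝ) : Measurable (signBall c) :=
  Measurable.ite (measurableSet_le (by fun_prop) measurable_const) measurable_const
    measurable_const

theorem abs_signBall (c x : ℝ) : |signBall c x| = 1 := by
  unfold signBall
  split_ifs <;> simp

theorem signBall_mono {c c' : ℝ} (h : c ≤ c') (x : ℝ) : signBall c x ≤ signBall c' x := by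
  unfold signBall
  split_ifs <;> linarith

theorem integrable_signBall (c : ℝ) (μ : Measure ℝ) [IsFiniteMeasure μ] :
    Integrable (signBall c) μ :=
  (integrable_const (1 : ℝ)).mono' (measurable_signBall c).aestronglyMeasurable
    (Filter.Eventually.of_forall fun x => (abs_signBall c x).le)

theorem integral_signBall_gauss1 (c : ℝ) {s : ℝ} (hs : 0 < s) :
    ∫ x, signBall c x ∂gauss1 0 s = ∫ x, signBall (c / s) x ∂gauss1 0 1 := by
  have hmap : gauss1 0 s = (gauss1 0 1).map (√s * ·) := by
    rw [gauss1_eq_gaussianReal 0 hs, gauss1_eq_gaussianReal 0 one_pos,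
      gaussianReal_map_const_mul, gaussianReal_ext_iff]
    refine ⟨by simp, NNReal.eq ?_⟩
    simp [Real.sq_sqrt hs.le, hs.le]
  rw [hmap, integral_map (by fun_prop) (measurable_signBall c).aestronglyMeasurable]
  congr 1 with x
  simp only [signBall, mul_pow, Real.sq_sqrt hs.le, le_div_iff₀' hs]

/-- The total variation distance of `N(0,1)` and `N(0,2)` is attained at the sign of the
difference of the densities. -/
theorem dG_gauss1_one_two_le :
    dG (fun _ : ℝ => (1 : ℝ)) (gauss1 0 1) (gauss1 0 2) ≤
      (∫ x, signBall (2 * Real.log 2) x ∂gauss1 0 1) -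
        ∫ x, signBall (2 * Real.log 2) x ∂gauss1 0 2 := by
  set p : ℝ → ℝ := gaussianPDFReal 0 1 with hp
  set q : ℝ → ℝ := gaussianPDFReal 0 2 with hq
  have hpq (x : ℝ) : p x = q x * Real.exp (Real.log 2 / 2 - x ^ 2 / 4) := by
    have hexp : Real.exp (Real.log 2 / 2) = √2 := by
      rw [Real.sqrt_eq_rpow, Real.rpow_def_of_pos two_pos]
      congr 1
      ring
    have hsplit : -x ^ 2 / 2 = -x ^ 2 / (2 * 2) + -(x ^ 2 / 4) := by ring
    simp only [hp, hq, gaussianPDFReal_def, NNReal.coe_one, NNReal.coe_ofNat, sub_zero, mul_one]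
    rw [sub_eq_add_neg, Real.exp_add, hexp, Real.sqrt_mul (by positivity) 2, hsplit,
      Real.exp_add]
    field_simp
  have hsign (x : ℝ) : |p x - q x| = p x * signBall (2 * Real.log 2) x -
      q x * signBall (2 * Real.log 2) x := by
    have hq0 : 0 ≤ q x := gaussianPDFReal_nonneg 0 2 x
    unfold signBall
    split_ifs with h
    · have := Real.one_le_exp (x := Real.log 2 / 2 - x ^ 2 / 4) (by linarith)
      rw [abs_of_nonneg] <;> rw [hpq] <;> nlinarith
    · have := Real.exp_le_one_iff (x := Real.log 2 / 2 - x ^ 2 / 4) |>.2 (by linarith)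
      rw [abs_of_nonpos] <;> rw [hpq] <;> nlinarith
  have hint {f : ℝ → ℝ} (hf : Measurable f) (hf1 : ∀ x, |f x| ≤ 1) (v : NNReal) :
      Integrable fun x => gaussianPDFReal 0 v x * f x :=
    (integrable_gaussianPDFReal 0 v).mul_bdd (c := 1) hf.aestronglyMeasurable
      (Filter.Eventually.of_forall hf1)
  have hdiff {f : ℝ → ℝ} (hf : Measurable f) (hf1 : ∀ x, |f x| ≤ 1) :
      (∫ x, f x ∂gauss1 0 1) - ∫ x, f x ∂gauss1 0 2 = ∫ x, (p x * f x - q x * f x) := by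
    rw [integral_sub (hint hf hf1 1) (hint hf hf1 2), gauss1_eq_gaussianReal 0 one_pos,
      gauss1_eq_gaussianReal 0 two_pos, Real.toNNReal_one, Real.toNNReal_ofNat,
      integral_gaussianReal_eq_integral_smul one_ne_zero,
      integral_gaussianReal_eq_integral_smul two_ne_zero]
    rfl
  refine dG_le (fun _ => zero_le_one) fun f hf hf1 => ?_
  rw [hdiff hf hf1, hdiff (measurable_signBall _) fun x => (abs_signBall _ x).le]
  simp only [← hsign]
  refine abs_integral_le_of_abs_le
    ((integrable_gaussianPDFReal 0 1).sub (integrable_gaussianPDFReal 0 2)).abs fun x => ?_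
  rw [← sub_mul, abs_mul]
  exact mul_le_of_le_one_right (abs_nonneg _) (hf1 x)

theorem dG_gauss1_one_two_pos :
    0 < dG (fun _ : ℝ => (1 : ℝ)) (gauss1 0 1) (gauss1 0 2) := by
  have := isProbabilityMeasure_gauss1 0 one_pos
  have := isProbabilityMeasure_gauss1 0 two_pos
  by_contra! hle
  have heq : gauss1 0 1 = gauss1 0 2 := by
    refine Measure.ext fun A hA => (measureReal_eq_measureReal_iff).1 ?_
    have h := le_dG (integrable_const (1 : ℝ)) (integrable_const (1 : ℝ))
      (μ := gauss1 0 1) (ν := gauss1 0 2) (f := A.indicator fun _ => 1)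
      (measurable_const.indicator hA)
      fun x => by by_cases hx : x ∈ A <;> simp [hx]
    simp only [integral_indicator_const _ hA, smul_eq_mul, mul_one] at h
    exact sub_eq_zero.1 (abs_nonpos_iff.1 (h.trans hle))
  rw [gauss1_eq_gaussianReal 0 one_pos, gauss1_eq_gaussianReal 0 two_pos,
    gaussianReal_ext_iff] at heq
  norm_num at heq

theorem dG_gauss1_one_two_le_dG_Gproj1 {ε : ℝ} (h0 : 0 < ε) (h1 : ε ≤ 1 / 2) :
    dG (fun _ : ℝ => (1 : ℝ)) (gauss1 0 1) (gauss1 0 2) ≤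
      dG g1 (Gproj1 (mu1 ε)) (Gproj1 (mu2 ε)) := by
  have hv : 0 < (3 - 2 * ε) * ε := mul_pos (by linarith) h0
  have := isProbabilityMeasure_gauss1 0 one_pos
  rw [Gproj1, Gproj1, mean1_mu1 h0, var1_mu1 h0, mean1_mu2 h0 h1, var1_mu2 h0 h1]
  refine dG_gauss1_one_two_le.trans (le_trans (le_trans ?_ (le_abs_self _))
    (le_dG (integrable_g1_gauss1 0 h0) (integrable_g1_gauss1 0 hv)
      (measurable_signBall (2 * Real.log 2 * ε))
      fun x => (abs_signBall _ x).le.trans (one_le_g1 x)))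
  rw [integral_signBall_gauss1 _ h0, integral_signBall_gauss1 _ hv,
    integral_signBall_gauss1 _ two_pos, mul_div_cancel_right₀ _ h0.ne',
    mul_div_mul_right _ _ h0.ne']
  refine sub_le_sub_left (integral_mono (integrable_signBall _ _) (integrable_signBall _ _)
    (signBall_mono ?_)) _
  have := Real.log_pos one_lt_two
  gcongr
  linarith

/-- **The Gaussian projection is not globally Lipschitz** in the weighted TV metric
(Remark after Lemma A.11): `d_g(μ₁, μ₂) ≤ 8ε`, while `d_g(Gμ₁, Gμ₂)` is bounded below by
the positive constant `d_TV(N(0,1), N(0,2))`; hence the Lipschitz ratio blows up as `ε → 0⁺`. -/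
theorem Gproj_not_globally_lipschitz :
    (∀ ε : ℝ, 0 < ε → ε ≤ 1 / 2 →
      dG g1 (mu1 ε) (mu2 ε) ≤ 8 * ε ∧
      dG (fun _ : ℝ => (1 : ℝ)) (gauss1 0 1) (gauss1 0 2) ≤
        dG g1 (Gproj1 (mu1 ε)) (Gproj1 (mu2 ε))) ∧
    0 < dG (fun _ : ℝ => (1 : ℝ)) (gauss1 0 1) (gauss1 0 2) ∧
    Filter.Tendsto
      (fun ε : ℝ => dG g1 (Gproj1 (mu1 ε)) (Gproj1 (mu2 ε)) / dG g1 (mu1 ε) (mu2 ε))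
      (nhdsWithin 0 (Set.Ioi 0)) Filter.atTop := by
  refine ⟨fun ε h0 h1 => ⟨dG_mu1_mu2_le h0 h1, dG_gauss1_one_two_le_dG_Gproj1 h0 h1⟩,
    dG_gauss1_one_two_pos, ?_⟩
  have hc := dG_gauss1_one_two_pos
  refine Filter.tendsto_atTop_mono'
    (f₁ := fun ε => dG (fun _ : ℝ => (1 : ℝ)) (gauss1 0 1) (gauss1 0 2) / 8 * ε⁻¹) _ ?_
    (tendsto_inv_nhdsGT_zero.const_mul_atTop (by positivity))
  filter_upwards [Ioc_mem_nhdsGT (show (0 : ℝ) < 1 / 2 by norm_num)] with ε ⟨h0, h1⟩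
  have hpos := h0.trans_le (le_dG_mu1_mu2 h0 h1)
  rw [← div_eq_mul_inv, div_div]
  exact div_le_div₀ (hc.le.trans (dG_gauss1_one_two_le_dG_Gproj1 h0 h1))
    (dG_gauss1_one_two_le_dG_Gproj1 h0 h1) hpos (dG_mu1_mu2_le h0 h1)

end EnKF
end
end

section
/- Local Lipschitz continuity of Gaussian conditioning: for every R ≥ 1 there exists a constant C_B = C_B(R, κ_y) such that for all nondegenerate Gaussian probability measures π, p ∈ G_R(R^d × R^K) and every datum y† ∈ R^K with |y†| ≤ κ_y, d_g(Bπ, Bp) ≤ C_B d_g(π, p). -/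
open MeasureTheory Matrix
open scoped BigOperators ENNReal

noncomputable section

namespace EnKF

variable {d K : ℕ}

section LinearAlgebra

variable {ι : Type*} [Fintype ι] [DecidableEq ι]

lemma quad_le_of_loe {S : Matrix ι ι ℝ} {c : ℝ} (h : loe S (c • 1)) (x : ι → ℝ) :
    x ⬝ᵥ (S *ᵥ x) ≤ c * ∑ i, x i ^ 2 := by
  have := h.dotProduct_mulVec_nonneg x
  simp only [star_trivial, sub_mulVec, dotProduct_sub, smul_mulVec, one_mulVec,
    dotProduct_smul, smul_eq_mul] at this
  have e : x ⬝ᵥ x = ∑ i, x i ^ 2 := by simp [dotProduct, sq]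
  rw [e] at this
  linarith

lemma le_quad_of_loe {S : Matrix ι ι ℝ} {c : ℝ} (h : loe (c • 1) S) (x : ι → ℝ) :
    c * ∑ i, x i ^ 2 ≤ x ⬝ᵥ (S *ᵥ x) := by
  have := h.dotProduct_mulVec_nonneg x
  simp only [star_trivial, sub_mulVec, dotProduct_sub, smul_mulVec, one_mulVec,
    dotProduct_smul, smul_eq_mul] at this
  have e : x ⬝ᵥ x = ∑ i, x i ^ 2 := by simp [dotProduct, sq]
  rw [e] at this
  linarith

lemma mulVec_inv_mulVec {S : Matrix ι ι ℝ} (hS : S.PosDef) (x : ι → ℝ) :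
    S *ᵥ (S⁻¹ *ᵥ x) = x := by
  rw [mulVec_mulVec, mul_nonsing_inv _ (isUnit_iff_ne_zero.2 hS.det_pos.ne'), one_mulVec]

lemma dotProduct_mulVec_comm_of_posDef {ι : Type*} [Fintype ι] {S : Matrix ι ι ℝ} (hS : S.PosDef)
    (x y : ι → ℝ) :
    x ⬝ᵥ (S *ᵥ y) = y ⬝ᵥ (S *ᵥ x) := by
  have h : Sᵀ = S := by simpa using hS.1.eq
  rw [dotProduct_mulVec, ← mulVec_transpose, h, dotProduct_comm]

/-- A lower bound on `S` bounds the Euclidean norm of `S⁻¹ x`. -/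
lemma sum_sq_inv_mulVec_le {S : Matrix ι ι ℝ} (hS : S.PosDef) {c : ℝ} (hc : 0 < c)
    (h : loe (c⁻¹ • 1) S) (x : ι → ℝ) :
    ∑ i, (S⁻¹ *ᵥ x) i ^ 2 ≤ c ^ 2 * ∑ i, x i ^ 2 := by
  set y := S⁻¹ *ᵥ x with hy
  have h1 := le_quad_of_loe h y
  rw [hy, mulVec_inv_mulVec hS, ← hy] at h1
  have h2 : (y ⬝ᵥ x) ^ 2 ≤ (∑ i, y i ^ 2) * ∑ i, x i ^ 2 :=
    Finset.sum_mul_sq_le_sq_mul_sq _ _ _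
  set a := ∑ i, y i ^ 2
  set b := ∑ i, x i ^ 2
  have ha : 0 ≤ a := Finset.sum_nonneg fun _ _ => sq_nonneg _
  have hb : 0 ≤ b := Finset.sum_nonneg fun _ _ => sq_nonneg _
  have h3 : a ≤ c * (y ⬝ᵥ x) := by
    rwa [inv_mul_le_iff₀ hc] at h1
  rcases ha.eq_or_lt with h0 | h0
  · rw [← h0]; positivity
  · have h4 : a ^ 2 ≤ c ^ 2 * (a * b) := by
      calc a ^ 2 ≤ (c * (y ⬝ᵥ x)) ^ 2 := by gcongr
        _ = c ^ 2 * (y ⬝ᵥ x) ^ 2 := by ring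
        _ ≤ _ := by gcongr
    nlinarith

lemma quad_inv_le {S : Matrix ι ι ℝ} (hS : S.PosDef) {c : ℝ} (hc : 0 < c)
    (h : loe (c⁻¹ • 1) S) (x : ι → ℝ) :
    x ⬝ᵥ (S⁻¹ *ᵥ x) ≤ c * ∑ i, x i ^ 2 := by
  have h1 := sum_sq_inv_mulVec_le hS hc h x
  have h2 : (x ⬝ᵥ (S⁻¹ *ᵥ x)) ^ 2 ≤ (∑ i, x i ^ 2) * ∑ i, (S⁻¹ *ᵥ x) i ^ 2 :=
    Finset.sum_mul_sq_le_sq_mul_sq _ _ _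
  have hb : 0 ≤ ∑ i, x i ^ 2 := Finset.sum_nonneg fun _ _ => sq_nonneg _
  refine (le_abs_self _).trans (abs_le_of_sq_le_sq ?_ (by positivity))
  nlinarith

lemma le_quad_inv {S : Matrix ι ι ℝ} (hS : S.PosDef) {c : ℝ} (hc : 0 < c)
    (h : loe S (c • 1)) (x : ι → ℝ) :
    c⁻¹ * ∑ i, x i ^ 2 ≤ x ⬝ᵥ (S⁻¹ *ᵥ x) := by
  set y := S⁻¹ *ᵥ x with hy
  have hSy : S *ᵥ y = x := mulVec_inv_mulVec hS x
  have h1 := hS.posSemidef.dotProduct_mulVec_nonneg (y - c⁻¹ • x)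
  have h2 := quad_le_of_loe h x
  have e : x ⬝ᵥ x = ∑ i, x i ^ 2 := by simp [dotProduct, sq]
  simp only [star_trivial, mulVec_sub, mulVec_smul, dotProduct_sub, sub_dotProduct, smul_dotProduct,
    dotProduct_smul, smul_eq_mul, hSy, dotProduct_mulVec_comm_of_posDef hS y x, e] at h1
  rw [dotProduct_comm y x] at h1
  have h3 : c⁻¹ * (c⁻¹ * (x ⬝ᵥ (S *ᵥ x))) ≤ c⁻¹ * (c⁻¹ * (c * ∑ i, x i ^ 2)) := by gcongr
  rw [inv_mul_cancel_left₀ hc.ne'] at h3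
  linarith

lemma abs_inv_apply_le {S : Matrix ι ι ℝ} (hS : S.PosDef) {c : ℝ} (hc : 0 < c)
    (h : loe (c⁻¹ • 1) S) (i j : ι) : |S⁻¹ i j| ≤ c := by
  have h1 := sum_sq_inv_mulVec_le hS hc h (Pi.single j 1)
  have h2 : ∑ k, (Pi.single j (1 : ℝ) : ι → ℝ) k ^ 2 = 1 := by
    simp [Pi.single_apply]
  rw [h2, mul_one] at h1
  have h3 : (S⁻¹ *ᵥ Pi.single j 1) i ^ 2 ≤ ∑ k, (S⁻¹ *ᵥ Pi.single j 1) k ^ 2 :=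
    Finset.single_le_sum (f := fun k => (S⁻¹ *ᵥ Pi.single j 1) k ^ 2)
      (fun _ _ => sq_nonneg _) (Finset.mem_univ i)
  rw [mulVec_single_one] at h3 h1
  exact abs_le_of_sq_le_sq (h3.trans h1) hc.le

/-- Entrywise Lipschitz continuity of matrix inversion. -/
lemma abs_inv_sub_inv_apply_le {S S' : Matrix ι ι ℝ} (hS : S.PosDef) (hS' : S'.PosDef)
    {c e : ℝ} (hc : 0 < c) (h : loe (c⁻¹ • 1) S) (h' : loe (c⁻¹ • 1) S')
    (he : ∀ i j, |S i j - S' i j| ≤ e) (i j : ι) :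
    |S⁻¹ i j - S'⁻¹ i j| ≤ (Fintype.card ι : ℝ) ^ 2 * (c ^ 2 * e) := by
  have u : IsUnit S.det := isUnit_iff_ne_zero.2 hS.det_pos.ne'
  have u' : IsUnit S'.det := isUnit_iff_ne_zero.2 hS'.det_pos.ne'
  have key : S⁻¹ - S'⁻¹ = S⁻¹ * (S' - S) * S'⁻¹ := by
    rw [mul_sub, sub_mul, nonsing_inv_mul _ u, one_mul, mul_assoc, mul_nonsing_inv _ u', mul_one]
  have key' : S⁻¹ i j - S'⁻¹ i j = ∑ l, (∑ k, S⁻¹ i k * (S' k l - S k l)) * S'⁻¹ l j := by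
    rw [← Matrix.sub_apply, key]; simp [mul_apply]
  rw [key']
  have b : ∀ k l, |S⁻¹ i k * (S' k l - S k l) * S'⁻¹ l j| ≤ c ^ 2 * e := fun k l => by
    have h1 := abs_inv_apply_le hS hc h i k
    have h2 := abs_inv_apply_le hS' hc h' l j
    have h3 : |S' k l - S k l| ≤ e := by rw [abs_sub_comm]; exact he k l
    have he0 : 0 ≤ e := (abs_nonneg _).trans h3
    rw [abs_mul, abs_mul]
    calc _ ≤ c * e * c := by gcongr
      _ = _ := by ring
  simp_rw [Finset.sum_mul]
  calc _ ≤ ∑ l, ∑ k, |S⁻¹ i k * (S' k l - S k l) * S'⁻¹ l j| :=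
        (Finset.abs_sum_le_sum_abs _ _).trans
          (Finset.sum_le_sum fun _ _ => Finset.abs_sum_le_sum_abs _ _)
    _ ≤ ∑ _l : ι, ∑ _k : ι, c ^ 2 * e :=
      Finset.sum_le_sum fun l _ => Finset.sum_le_sum fun k _ => b k l
    _ = _ := by simp; ring

end LinearAlgebra

section GaussianMoments

variable {ι : Type*} [Fintype ι]

lemma one_add_sq_mul_exp_le {b s : ℝ} (hb : 0 < b) (hs : 0 ≤ s) :
    (1 + s) ^ 2 * Real.exp (-b * s) ≤ (1 + 4 / b) ^ 2 * Real.exp (-(b / 2) * s) := by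
  have h1 : 1 + s ≤ (1 + 4 / b) * Real.exp (b / 4 * s) := by
    have h2 := Real.add_one_le_exp (b / 4 * s)
    have h3 : 1 ≤ Real.exp (b / 4 * s) := Real.one_le_exp (by positivity)
    have h4 : s = 4 / b * (b / 4 * s) := by field_simp
    have h5 : 4 / b * (b / 4 * s) ≤ 4 / b * Real.exp (b / 4 * s) := by gcongr; linarith
    linarith
  calc (1 + s) ^ 2 * Real.exp (-b * s)
      ≤ ((1 + 4 / b) * Real.exp (b / 4 * s)) ^ 2 * Real.exp (-b * s) := by gcongr
    _ = (1 + 4 / b) ^ 2 * (Real.exp (b / 4 * s) * Real.exp (b / 4 * s) * Real.exp (-b * s)) := by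
        ring
    _ = _ := by rw [← Real.exp_add, ← Real.exp_add]; ring_nf

lemma integrable_exp_neg_mul_sum_sq {b : ℝ} (hb : 0 < b) :
    Integrable fun x : ι → ℝ => Real.exp (-b * ∑ i, x i ^ 2) := by
  have := Integrable.fintype_prod (ι := ι) (f := fun _ t => Real.exp (-b * t ^ 2))
    (μ := fun _ => volume) fun _ => integrable_exp_neg_mul_sq hb
  refine this.congr (ae_of_all _ fun x => ?_)
  simp only [Finset.mul_sum, Real.exp_sum]

lemma integrable_one_add_sq_mul_exp {b : ℝ} (hb : 0 < b) :
    Integrable fun x : ι → ℝ => (1 + ∑ i, x i ^ 2) ^ 2 * Real.exp (-b * ∑ i, x i ^ 2) := by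
  refine ((integrable_exp_neg_mul_sum_sq (half_pos hb)).const_mul ((1 + 4 / b) ^ 2)).mono'
    (by fun_prop) (ae_of_all _ fun x => ?_)
  rw [Real.norm_of_nonneg (by positivity)]
  exact one_add_sq_mul_exp_le hb (Finset.sum_nonneg fun _ _ => sq_nonneg _)

/-- Density of the standard Gaussian on `ι → ℝ`, as a product. -/
def stdDensity (z : ι → ℝ) : ℝ := ∏ i, ProbabilityTheory.gaussianPDFReal 0 1 (z i)

lemma stdDensity_eq (z : ι → ℝ) :
    stdDensity z = (Real.sqrt ((2 * Real.pi) ^ Fintype.card ι))⁻¹ *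
      Real.exp (-(1 / 2) * ∑ i, z i ^ 2) := by
  simp only [stdDensity, ProbabilityTheory.gaussianPDFReal, Finset.prod_mul_distrib,
    Finset.prod_const, ← Real.exp_sum]
  congr 1
  · rw [Finset.card_univ, inv_pow, Real.sqrt_eq_rpow, Real.sqrt_eq_rpow, ← Real.rpow_natCast,
      ← Real.rpow_natCast, ← Real.rpow_mul (by positivity), ← Real.rpow_mul (by positivity)]
    simp [mul_comm]
  · congr 1
    rw [Finset.mul_sum]
    refine Finset.sum_congr rfl fun i _ => ?_
    simp; ring

lemma integral_stdDensity : ∫ z : ι → ℝ, stdDensity z = 1 := by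
  simp only [stdDensity]
  rw [integral_fintype_prod_volume_eq_prod
    (fun (_ : ι) t => ProbabilityTheory.gaussianPDFReal 0 1 t)]
  simp [ProbabilityTheory.integral_gaussianPDFReal_eq_one]

lemma integral_id_mul_gaussianPDFReal :
    ∫ t : ℝ, t * ProbabilityTheory.gaussianPDFReal 0 1 t = 0 := by
  have h := ProbabilityTheory.integral_id_gaussianReal (μ := 0) (v := 1)
  rw [ProbabilityTheory.integral_gaussianReal_eq_integral_smul one_ne_zero] at h
  simpa [mul_comm] using h

lemma integral_sq_mul_gaussianPDFReal :
    ∫ t : ℝ, t * t * ProbabilityTheory.gaussianPDFReal 0 1 t = 1 := by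
  have h := ProbabilityTheory.variance_id_gaussianReal (μ := 0) (v := 1)
  rw [ProbabilityTheory.variance_of_integral_eq_zero aemeasurable_id (by simp),
    ProbabilityTheory.integral_gaussianReal_eq_integral_smul one_ne_zero] at h
  simpa [mul_comm, sq] using h

lemma integral_mul_stdDensity [DecidableEq ι] (i j : ι) :
    ∫ z : ι → ℝ, z i * z j * stdDensity z = if i = j then 1 else 0 := by
  have e : ∀ z : ι → ℝ, z i * z j * stdDensity z = ∏ k, ((if k = i then z k else 1) *
      (if k = j then z k else 1) * ProbabilityTheory.gaussianPDFReal 0 1 (z k)) := fun z => by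
    rw [Finset.prod_mul_distrib, Finset.prod_mul_distrib, stdDensity]
    simp only [Finset.prod_ite_eq', Finset.mem_univ, if_true]
  simp_rw [e]
  rw [integral_fintype_prod_volume_eq_prod (fun k t => ((if k = i then t else 1) *
      (if k = j then t else 1) * ProbabilityTheory.gaussianPDFReal 0 1 t))]
  split_ifs with h
  · subst h
    refine Finset.prod_eq_one fun k _ => ?_
    by_cases hk : k = i
    · simp [hk, integral_sq_mul_gaussianPDFReal]
    · simp [hk, ProbabilityTheory.integral_gaussianPDFReal_eq_one]
  · refine Finset.prod_eq_zero (Finset.mem_univ i) ?_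
    simp [h, integral_id_mul_gaussianPDFReal]

lemma integrable_mul_stdDensity (i j : ι) :
    Integrable fun z : ι → ℝ => z i * z j * stdDensity z := by
  have h := (integrable_one_add_sq_mul_exp (ι := ι) (b := 1 / 2) (by norm_num)).const_mul
    (Real.sqrt ((2 * Real.pi) ^ Fintype.card ι))⁻¹
  simp_rw [stdDensity_eq]
  refine h.mono' (by fun_prop) (ae_of_all _ fun z => ?_)
  have hs : ∀ k, z k ^ 2 ≤ ∑ i, z i ^ 2 := fun k =>
    Finset.single_le_sum (f := fun i => z i ^ 2) (fun _ _ => sq_nonneg _) (Finset.mem_univ k)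
  have : |z i * z j| ≤ (1 + ∑ i, z i ^ 2) ^ 2 := by
    rw [abs_le]
    constructor <;>
      nlinarith [hs i, hs j, sq_nonneg (z i - z j), sq_nonneg (z i + z j), sq_nonneg (z i)]
  rw [norm_mul, Real.norm_eq_abs, Real.norm_of_nonneg (by positivity)]
  calc _ ≤ (1 + ∑ i, z i ^ 2) ^ 2 * _ := mul_le_mul_of_nonneg_right this (by positivity)
    _ = _ := by ring

variable [DecidableEq ι]

lemma integral_affine {M : Matrix ι ι ℝ} (hM : M.det ≠ 0) (m : ι → ℝ) (F : (ι → ℝ) → ℝ) :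
    ∫ x, F x = |M.det| * ∫ z, F (M *ᵥ z + m) := by
  have h := Real.map_matrix_volume_pi_eq_smul_volume_pi hM
  have hemb : MeasurableEmbedding (toLin' M) :=
    (LinearEquiv.toContinuousLinearEquiv
      (Matrix.toLinearEquiv' M (M.invertibleOfIsUnitDet (isUnit_iff_ne_zero.2 hM))))
      |>.toHomeomorph.measurableEmbedding
  have h2 := hemb.integral_map (μ := volume) (fun x => F (x + m))
  rw [h, integral_smul_measure, integral_add_right_eq_self (μ := volume) F m] at h2
  simp only [toLin'_apply] at h2
  rw [← h2, ENNReal.toReal_ofReal (abs_nonneg _), smul_eq_mul, abs_inv, ← mul_assoc,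
    mul_inv_cancel₀ (abs_ne_zero.2 hM), one_mul]

/-- Density of the Gaussian `N(m, S)` on `ι → ℝ`. -/
def pdens (m : ι → ℝ) (S : Matrix ι ι ℝ) (x : ι → ℝ) : ℝ :=
  (Real.sqrt ((2 * Real.pi) ^ Fintype.card ι * S.det))⁻¹ *
    Real.exp (-(1 / 2) * ((x - m) ⬝ᵥ (S⁻¹ *ᵥ (x - m))))

lemma exists_factor {S : Matrix ι ι ℝ} (hS : S.PosDef) :
    ∃ M : Matrix ι ι ℝ, M.det ≠ 0 ∧ S = M * Mᵀ := by
  open scoped MatrixOrder in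
  obtain ⟨B, hB⟩ := CStarAlgebra.nonneg_iff_eq_star_mul_self.1 hS.posSemidef.nonneg
  have e : S = Bᵀ * Bᵀᵀ := by rw [hB, transpose_transpose, star_eq_conjTranspose]; simp
  refine ⟨Bᵀ, fun h => hS.det_pos.ne' ?_, e⟩
  rw [e, det_mul, h, zero_mul]

lemma abs_det_mul_pdens {M : Matrix ι ι ℝ} (hM : M.det ≠ 0) (m z : ι → ℝ) :
    |M.det| * pdens m (M * Mᵀ) (M *ᵥ z + m) = stdDensity z := by
  have e : M⁻¹ * M = 1 := nonsing_inv_mul _ (isUnit_iff_ne_zero.2 hM)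
  have q : (M *ᵥ z) ⬝ᵥ ((M * Mᵀ)⁻¹ *ᵥ (M *ᵥ z)) = ∑ i, z i ^ 2 := by
    rw [Matrix.mul_inv_rev, mulVec_mulVec, mul_assoc, e, mul_one, ← transpose_nonsing_inv,
      mulVec_transpose, dotProduct_comm, ← dotProduct_mulVec, mulVec_mulVec, e, one_mulVec]
    simp [dotProduct, sq]
  rw [pdens, stdDensity_eq, add_sub_cancel_right, q, det_mul, det_transpose,
    Real.sqrt_mul (by positivity), Real.sqrt_mul_self_eq_abs, mul_inv]
  field_simp

lemma integral_mul_pdens {S M : Matrix ι ι ℝ} (hM : M.det ≠ 0) (hS : S = M * Mᵀ) (m : ι → ℝ)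
    (h : (ι → ℝ) → ℝ) :
    ∫ x, h (x - m) * pdens m S x = ∫ z, h (M *ᵥ z) * stdDensity z := by
  rw [integral_affine hM m, ← integral_const_mul]
  refine integral_congr_ae (ae_of_all _ fun z => ?_)
  simp only [add_sub_cancel_right]
  rw [← abs_det_mul_pdens hM m z, hS]
  ring

lemma integral_pdens {S : Matrix ι ι ℝ} (hS : S.PosDef) (m : ι → ℝ) :
    ∫ x, pdens m S x = 1 := by
  obtain ⟨M, hM, e⟩ := exists_factor hS
  simpa [integral_stdDensity] using integral_mul_pdens hM e m fun _ => 1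

lemma integral_sub_mul_pdens {S : Matrix ι ι ℝ} (hS : S.PosDef) (m : ι → ℝ) (i : ι) :
    ∫ x, (x i - m i) * pdens m S x = 0 := by
  obtain ⟨M, hM, e⟩ := exists_factor hS
  have h := integral_mul_pdens hM e m fun x => x i
  simp only [Pi.sub_apply] at h
  rw [h]
  have h2 := integral_neg_eq_self (fun z => (M *ᵥ z) i * stdDensity z) volume
  have h3 : ∀ z : ι → ℝ, (M *ᵥ (-z)) i * stdDensity (-z) = -((M *ᵥ z) i * stdDensity z) :=
    fun z => by simp [mulVec_neg, stdDensity_eq]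
  simp_rw [h3, integral_neg] at h2
  linarith

lemma integral_sub_mul_sub_mul_pdens {S : Matrix ι ι ℝ} (hS : S.PosDef) (m : ι → ℝ) (i j : ι) :
    ∫ x, (x i - m i) * (x j - m j) * pdens m S x = S i j := by
  obtain ⟨M, hM, e⟩ := exists_factor hS
  have h := integral_mul_pdens hM e m fun x => x i * x j
  simp only [Pi.sub_apply] at h
  rw [h]
  have h3 : ∀ z : ι → ℝ, (M *ᵥ z) i * (M *ᵥ z) j * stdDensity z =
      ∑ k, ∑ l, M i k * M j l * (z k * z l * stdDensity z) := fun z => by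
    simp only [mulVec, dotProduct]
    rw [Finset.sum_mul_sum]
    simp only [Finset.sum_mul]
    exact Finset.sum_congr rfl fun k _ => Finset.sum_congr rfl fun l _ => by ring
  simp_rw [h3]
  rw [integral_finsetSum _ fun k _ => integrable_finsetSum _ fun l _ =>
    (integrable_mul_stdDensity k l).const_mul _]
  simp_rw [integral_finsetSum _ fun l _ => (integrable_mul_stdDensity _ l).const_mul _,
    integral_const_mul, integral_mul_stdDensity]
  simp [e, Matrix.mul_apply]

end GaussianMoments

section Estimates

variable {ι : Type*} [Fintype ι]

lemma half_sum_sq_sub_le (x m : ι → ℝ) :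
    (∑ i, x i ^ 2) / 2 - ∑ i, m i ^ 2 ≤ ∑ i, (x - m) i ^ 2 := by
  rw [Finset.sum_div, ← Finset.sum_sub_distrib]
  refine Finset.sum_le_sum fun i _ => ?_
  simp only [Pi.sub_apply]
  nlinarith [sq_nonneg (x i - 2 * m i)]

lemma sum_sq_sub_le (x m : ι → ℝ) :
    ∑ i, (x - m) i ^ 2 ≤ 2 * ∑ i, x i ^ 2 + 2 * ∑ i, m i ^ 2 := by
  rw [Finset.mul_sum, Finset.mul_sum, ← Finset.sum_add_distrib]
  refine Finset.sum_le_sum fun i _ => ?_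
  simp only [Pi.sub_apply]
  nlinarith [sq_nonneg (x i + m i)]

lemma sq_apply_le_sum_sq (x : ι → ℝ) (i : ι) : x i ^ 2 ≤ ∑ j, x j ^ 2 :=
  Finset.single_le_sum (f := fun j => x j ^ 2) (fun _ _ => sq_nonneg _) (Finset.mem_univ i)

lemma abs_apply_le_weight (x : ι → ℝ) (i : ι) : |x i| ≤ 1 + ∑ j, x j ^ 2 := by
  have := sq_apply_le_sum_sq x i
  rw [abs_le]; constructor <;> nlinarith

lemma abs_apply_mul_apply_le_weight (x : ι → ℝ) (i j : ι) :
    |x i * x j| ≤ 1 + ∑ k, x k ^ 2 := by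
  have h1 := sq_apply_le_sum_sq x i
  have h2 := sq_apply_le_sum_sq x j
  rw [abs_le]
  constructor <;> nlinarith [sq_nonneg (x i - x j), sq_nonneg (x i + x j)]

lemma sum_sq_le_of_enorm_le {x : ι → ℝ} {r : ℝ} (h : enorm x ≤ r) : ∑ i, x i ^ 2 ≤ r ^ 2 := by
  rw [← Real.sq_sqrt (Finset.sum_nonneg fun i _ => sq_nonneg (x i))]
  exact pow_le_pow_left₀ (Real.sqrt_nonneg _) h 2

lemma abs_exp_sub_exp_le {a b E : ℝ} (ha : Real.exp a ≤ E) (hb : Real.exp b ≤ E) :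
    |Real.exp a - Real.exp b| ≤ |a - b| * E := by
  wlog h : b ≤ a generalizing a b
  · rw [abs_sub_comm, abs_sub_comm a]
    exact this hb ha (le_of_not_ge h)
  rw [abs_of_nonneg (sub_nonneg.2 (Real.exp_le_exp.2 h)), abs_of_nonneg (sub_nonneg.2 h)]
  have h1 : Real.exp b = Real.exp a * Real.exp (b - a) := by rw [← Real.exp_add]; ring_nf
  have h2 := Real.add_one_le_exp (b - a)
  have h3 : Real.exp a * (b - a + 1) ≤ Real.exp a * Real.exp (b - a) := by gcongr
  have h4 : (a - b) * Real.exp a ≤ (a - b) * E :=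
    mul_le_mul_of_nonneg_left ha (sub_nonneg.2 h)
  linarith

/-- The difference of two quadratic forms centred at different points, in terms of entrywise
differences of the parameters. -/
lemma abs_quad_sub_quad_le {P P' : Matrix ι ι ℝ} {w w' : ι → ℝ} {c e e' G : ℝ}
    (hG : 1 ≤ G) (hw : ∀ i, w i ^ 2 ≤ G) (hw' : ∀ i, w' i ^ 2 ≤ G)
    (he : ∀ i, |w i - w' i| ≤ e) (hP : ∀ i j, |P i j - P' i j| ≤ e') (hc : ∀ i j, |P' i j| ≤ c) :
    |w ⬝ᵥ (P *ᵥ w) - w' ⬝ᵥ (P' *ᵥ w')| ≤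
      (Fintype.card ι : ℝ) ^ 2 * ((e' + 2 * c * e) * G) := by
  have ew : ∀ (A : Matrix ι ι ℝ) (v : ι → ℝ), v ⬝ᵥ (A *ᵥ v) = ∑ i, ∑ j, v i * (A i j * v j) :=
    fun A v => by simp only [dotProduct, mulVec, Finset.mul_sum]
  have habs : ∀ t : ℝ, t ^ 2 ≤ G → |t| ≤ G := fun t ht => by
    rw [abs_le]; constructor <;> nlinarith
  have b : ∀ i j, |w i * (P i j * w j) - w' i * (P' i j * w' j)| ≤ (e' + 2 * c * e) * G := by
    intro i j
    have e1 : w i * (P i j * w j) - w' i * (P' i j * w' j) =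
      (P i j - P' i j) * (w i * w j) + P' i j * ((w i - w' i) * w j) +
        P' i j * (w' i * (w j - w' j)) := by ring
    have he0 : 0 ≤ e := (abs_nonneg _).trans (he i)
    have he0' : 0 ≤ e' := (abs_nonneg _).trans (hP i j)
    have hc0 : 0 ≤ c := (abs_nonneg _).trans (hc i j)
    have hww : |w i * w j| ≤ G := by
      rw [abs_le]
      constructor <;> nlinarith [hw i, hw j, sq_nonneg (w i - w j), sq_nonneg (w i + w j)]
    have t1 : |(P i j - P' i j) * (w i * w j)| ≤ e' * G := by
      rw [abs_mul]; exact mul_le_mul (hP i j) hww (abs_nonneg _) he0'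
    have t2 : |P' i j * ((w i - w' i) * w j)| ≤ c * (e * G) := by
      rw [abs_mul, abs_mul]
      exact mul_le_mul (hc i j) (mul_le_mul (he i) (habs _ (hw j)) (abs_nonneg _) he0)
        (by positivity) hc0
    have t3 : |P' i j * (w' i * (w j - w' j))| ≤ c * (G * e) := by
      rw [abs_mul, abs_mul]
      exact mul_le_mul (hc i j) (mul_le_mul (habs _ (hw' i)) (he j) (abs_nonneg _) (by linarith))
        (by positivity) hc0
    rw [e1]
    refine (abs_add_three _ _ _).trans ?_
    linarith
  rw [ew, ew, ← Finset.sum_sub_distrib]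
  simp_rw [← Finset.sum_sub_distrib]
  calc _ ≤ ∑ i, ∑ j, |w i * (P i j * w j) - w' i * (P' i j * w' j)| :=
        (Finset.abs_sum_le_sum_abs _ _).trans
          (Finset.sum_le_sum fun _ _ => Finset.abs_sum_le_sum_abs _ _)
    _ ≤ ∑ _i : ι, ∑ _j : ι, (e' + 2 * c * e) * G :=
        Finset.sum_le_sum fun i _ => Finset.sum_le_sum fun j _ => b i j
    _ = _ := by simp; ring

/-- Stability of normalised densities in a weighted `L¹` sense. -/
lemma abs_integral_normalized_sub_le {α : Type*} [MeasurableSpace α] {μ : Measure α}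
    {f f' g E φ : α → ℝ} {δ z : ℝ} (hf : Measurable f) (hf' : Measurable f')
    (hφ : Measurable φ) (hg1 : ∀ x, 1 ≤ g x) (hf0 : ∀ x, 0 ≤ f x) (hf0' : ∀ x, 0 ≤ f' x)
    (hfE : ∀ x, f x ≤ E x) (hfE' : ∀ x, f' x ≤ E x)
    (hδ : ∀ x, |f x - f' x| ≤ δ * (g x * E x)) (hφg : ∀ x, |φ x| ≤ g x)
    (hI : Integrable (fun x => g x ^ 2 * E x) μ) (hz : 0 < z) (hzf : z ≤ ∫ x, f x ∂μ)
    (hzf' : z ≤ ∫ x, f' x ∂μ) :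
    |(∫ x, f x / (∫ y, f y ∂μ) * φ x ∂μ) - ∫ x, f' x / (∫ y, f' y ∂μ) * φ x ∂μ| ≤
      δ * ((∫ x, g x ^ 2 * E x ∂μ) / z + ((∫ x, g x ^ 2 * E x ∂μ) / z) ^ 2) := by
  have hE : ∀ x, 0 ≤ E x := fun x => (hf0 x).trans (hfE x)
  have hgE : ∀ x, g x * E x ≤ g x ^ 2 * E x := fun x =>
    mul_le_mul_of_nonneg_right (by nlinarith [hg1 x]) (hE x)
  have hEg : ∀ x, E x ≤ g x * E x := fun x => by nlinarith [hg1 x, hE x]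
  set I := ∫ x, g x ^ 2 * E x ∂μ with hIdef
  have hI0 : 0 ≤ I := integral_nonneg fun x => mul_nonneg (sq_nonneg _) (hE x)
  have bnd : ∀ h : α → ℝ, (∀ x, 0 ≤ h x) → (∀ x, h x ≤ E x) → ∀ x, ‖h x * φ x‖ ≤ g x ^ 2 * E x :=
    fun h h0 h1 x => by
      rw [norm_mul, Real.norm_of_nonneg (h0 x), Real.norm_eq_abs]
      calc h x * |φ x| ≤ E x * g x := mul_le_mul (h1 x) (hφg x) (abs_nonneg _) (hE x)
        _ = g x * E x := mul_comm _ _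
        _ ≤ _ := hgE x
  have int0 : ∀ h : α → ℝ, Measurable h → (∀ x, 0 ≤ h x) → (∀ x, h x ≤ E x) → Integrable h μ :=
    fun h hm h0 h1 => hI.mono' hm.aestronglyMeasurable (ae_of_all _ fun x => by
      rw [Real.norm_of_nonneg (h0 x)]
      exact (h1 x).trans ((hEg x).trans (hgE x)))
  have intφ : ∀ h : α → ℝ, Measurable h → (∀ x, 0 ≤ h x) → (∀ x, h x ≤ E x) →
      Integrable (fun x => h x * φ x) μ :=
    fun h hm h0 h1 => hI.mono' (hm.mul hφ).aestronglyMeasurable (ae_of_all _ (bnd h h0 h1))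
  set Z := ∫ x, f x ∂μ with hZ
  set Z' := ∫ x, f' x ∂μ with hZ'
  set A := ∫ x, f x * φ x ∂μ with hA
  set A' := ∫ x, f' x * φ x ∂μ with hA'
  have e1 : ∫ x, f x / Z * φ x ∂μ = A / Z := by
    rw [hA, ← integral_div]; congr 1; ext x; ring
  have e2 : ∫ x, f' x / Z' * φ x ∂μ = A' / Z' := by
    rw [hA', ← integral_div]; congr 1; ext x; ring
  have dA : |A - A'| ≤ δ * I := by
    rw [hA, hA', ← integral_sub (intφ f hf hf0 hfE) (intφ f' hf' hf0' hfE'), hIdef,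
      ← integral_const_mul, ← Real.norm_eq_abs]
    refine norm_integral_le_of_norm_le (hI.const_mul δ) (ae_of_all _ fun x => ?_)
    rw [← sub_mul, norm_mul, Real.norm_eq_abs, Real.norm_eq_abs]
    calc |f x - f' x| * |φ x| ≤ δ * (g x * E x) * g x :=
          mul_le_mul (hδ x) (hφg x) (abs_nonneg _) ((abs_nonneg _).trans (hδ x))
      _ = _ := by ring
  have dZ : |Z - Z'| ≤ δ * I := by
    rw [hZ, hZ', ← integral_sub (int0 f hf hf0 hfE) (int0 f' hf' hf0' hfE'), hIdef,
      ← integral_const_mul, ← Real.norm_eq_abs]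
    refine norm_integral_le_of_norm_le (hI.const_mul δ) (ae_of_all _ fun x => ?_)
    rw [Real.norm_eq_abs]
    calc |f x - f' x| ≤ δ * (g x * E x) := hδ x
      _ ≤ δ * (g x * E x) * g x :=
        le_mul_of_one_le_right ((abs_nonneg _).trans (hδ x)) (hg1 x)
      _ = _ := by ring
  have bA' : |A'| ≤ I := by
    rw [hA', ← Real.norm_eq_abs]
    exact norm_integral_le_of_norm_le hI (ae_of_all _ (bnd f' hf0' hfE'))
  have hZ0 : 0 < Z := hz.trans_le hzf
  have hZ0' : 0 < Z' := hz.trans_le hzf'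
  have hδI : 0 ≤ δ * I := (abs_nonneg _).trans dA
  rw [e1, e2]
  have e3 : A / Z - A' / Z' = (A - A') / Z - A' * (Z - Z') / (Z * Z') := by
    field_simp; ring
  rw [e3]
  calc _ ≤ |(A - A') / Z| + |A' * (Z - Z') / (Z * Z')| := abs_sub _ _
    _ = |A - A'| / Z + |A'| * |Z - Z'| / (Z * Z') := by
        rw [abs_div, abs_div, abs_mul, abs_of_pos hZ0, abs_of_pos (mul_pos hZ0 hZ0')]
    _ ≤ δ * I / z + I * (δ * I) / (z * z) := by gcongr
    _ = _ := by field_simp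

variable [DecidableEq ι]

lemma exp_quad_le {S : Matrix ι ι ℝ} (hS : S.PosDef) {c r : ℝ} (hc : 0 < c)
    (h : loe S (c • 1)) {m : ι → ℝ} (hm : ∑ i, m i ^ 2 ≤ r) (x : ι → ℝ) :
    Real.exp (-(1 / 2) * ((x - m) ⬝ᵥ (S⁻¹ *ᵥ (x - m)))) ≤
      Real.exp (c⁻¹ * r) * Real.exp (-(c⁻¹ / 4) * ∑ i, x i ^ 2) := by
  rw [← Real.exp_add, Real.exp_le_exp]
  have h1 := le_quad_inv hS hc h (x - m)
  have h2 : c⁻¹ * ((∑ i, x i ^ 2) / 2 - r) ≤ c⁻¹ * ∑ i, (x - m) i ^ 2 := by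
    gcongr
    linarith [half_sum_sq_sub_le x m]
  have hr : 0 ≤ c⁻¹ * r :=
    mul_nonneg (by positivity) ((Finset.sum_nonneg fun _ _ => sq_nonneg _).trans hm)
  linarith

lemma le_exp_quad {S : Matrix ι ι ℝ} (hS : S.PosDef) {c r : ℝ} (hc : 0 < c)
    (h : loe (c⁻¹ • 1) S) {m : ι → ℝ} (hm : ∑ i, m i ^ 2 ≤ r) (x : ι → ℝ) :
    Real.exp (-(c * r)) * Real.exp (-c * ∑ i, x i ^ 2) ≤
      Real.exp (-(1 / 2) * ((x - m) ⬝ᵥ (S⁻¹ *ᵥ (x - m)))) := by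
  rw [← Real.exp_add, Real.exp_le_exp]
  have h1 := quad_inv_le hS hc h (x - m)
  have h2 : c * ∑ i, (x - m) i ^ 2 ≤ c * (2 * ∑ i, x i ^ 2 + 2 * r) := by
    gcongr
    linarith [sum_sq_sub_le x m]
  linarith

lemma measurable_exp_quad (m : ι → ℝ) (S : Matrix ι ι ℝ) :
    Measurable fun x => Real.exp (-(1 / 2) * ((x - m) ⬝ᵥ (S⁻¹ *ᵥ (x - m)))) := by
  simp only [dotProduct, mulVec]
  fun_prop

lemma measurable_pdens (m : ι → ℝ) (S : Matrix ι ι ℝ) : Measurable (pdens m S) :=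
  (measurable_exp_quad m S).const_mul _

lemma pdens_nonneg (m : ι → ℝ) (S : Matrix ι ι ℝ) (x : ι → ℝ) : 0 ≤ pdens m S x := by
  unfold pdens; positivity

lemma integrable_weight_mul_pdens {S : Matrix ι ι ℝ} (hS : S.PosDef) {c : ℝ} (hc : 0 < c)
    (h : loe S (c • 1)) (m : ι → ℝ) :
    Integrable fun x => (1 + ∑ i, x i ^ 2) * pdens m S x := by
  have hb : 0 < c⁻¹ / 4 := by positivity
  refine ((integrable_one_add_sq_mul_exp hb).const_mul
    ((Real.sqrt ((2 * Real.pi) ^ Fintype.card ι * S.det))⁻¹ *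
      Real.exp (c⁻¹ * ∑ i, m i ^ 2))).mono'
    ((by fun_prop : Measurable fun x : ι → ℝ => 1 + ∑ i, x i ^ 2).mul
      (measurable_pdens m S)).aestronglyMeasurable (ae_of_all _ fun x => ?_)
  have h0 : 0 ≤ ∑ i, x i ^ 2 := Finset.sum_nonneg fun _ _ => sq_nonneg _
  rw [Real.norm_of_nonneg (mul_nonneg (by positivity) (pdens_nonneg _ _ _)), pdens]
  calc _ ≤ (1 + ∑ i, x i ^ 2) ^ 2 * ((Real.sqrt ((2 * Real.pi) ^ Fintype.card ι * S.det))⁻¹ *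
        (Real.exp (c⁻¹ * ∑ i, m i ^ 2) * Real.exp (-(c⁻¹ / 4) * ∑ i, x i ^ 2))) := by
        gcongr ?_ * (_ * ?_)
        · nlinarith
        · exact exp_quad_le hS hc h le_rfl x
    _ = _ := by ring

lemma integrable_mul_pdens {S : Matrix ι ι ℝ} (hS : S.PosDef) {c : ℝ} (hc : 0 < c)
    (h : loe S (c • 1)) (m : ι → ℝ) {φ : (ι → ℝ) → ℝ} (hφ : Measurable φ)
    (hb : ∀ x, |φ x| ≤ 1 + ∑ i, x i ^ 2) : Integrable fun x => φ x * pdens m S x := by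
  refine (integrable_weight_mul_pdens hS hc h m).mono'
    (hφ.mul (measurable_pdens m S)).aestronglyMeasurable (ae_of_all _ fun x => ?_)
  rw [norm_mul, Real.norm_of_nonneg (pdens_nonneg _ _ _)]
  exact mul_le_mul_of_nonneg_right (hb x) (pdens_nonneg _ _ _)

lemma integral_apply_mul_pdens {S : Matrix ι ι ℝ} (hS : S.PosDef) {c : ℝ} (hc : 0 < c)
    (h : loe S (c • 1)) (m : ι → ℝ) (i : ι) : ∫ x, x i * pdens m S x = m i := by
  have h1 := integral_sub_mul_pdens hS m i
  have i1 := integrable_mul_pdens hS hc h m (measurable_pi_apply i)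
    fun x => abs_apply_le_weight x i
  have i0 : Integrable (pdens m S) := by
    simpa using integrable_mul_pdens hS hc h m (φ := fun _ => 1) measurable_const fun x => by
      simpa using Finset.sum_nonneg fun i _ => sq_nonneg (x i)
  simp_rw [sub_mul] at h1
  rw [integral_sub i1 (i0.const_mul _), integral_const_mul, integral_pdens hS] at h1
  linarith

lemma integral_apply_mul_apply_mul_pdens {S : Matrix ι ι ℝ} (hS : S.PosDef) {c : ℝ} (hc : 0 < c)
    (h : loe S (c • 1)) (m : ι → ℝ) (i j : ι) :
    ∫ x, x i * x j * pdens m S x = S i j + m i * m j := by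
  have h1 := integral_sub_mul_sub_mul_pdens hS m i j
  have i1 := fun i => integrable_mul_pdens hS hc h m (measurable_pi_apply i)
    fun x => abs_apply_le_weight x i
  have i2 : Integrable fun x => x i * x j * pdens m S x := integrable_mul_pdens hS hc h m
    ((measurable_pi_apply i).mul (measurable_pi_apply j))
    fun x => abs_apply_mul_apply_le_weight x i j
  have i0 : Integrable (pdens m S) := by
    simpa using integrable_mul_pdens hS hc h m (φ := fun _ => 1) measurable_const fun x => by
      simpa using Finset.sum_nonneg fun i _ => sq_nonneg (x i)
  have e : ∀ x : ι → ℝ, (x i - m i) * (x j - m j) * pdens m S x =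
      x i * x j * pdens m S x - m j * (x i * pdens m S x) - m i * (x j * pdens m S x)
        + m i * m j * pdens m S x := fun x => by ring
  have i3 : Integrable fun x => x i * x j * pdens m S x - m j * (x i * pdens m S x) :=
    i2.sub ((i1 i).const_mul _)
  have i4 : Integrable fun x => x i * x j * pdens m S x - m j * (x i * pdens m S x) -
      m i * (x j * pdens m S x) := i3.sub ((i1 j).const_mul _)
  simp_rw [e] at h1
  rw [integral_add i4 (i0.const_mul _), integral_sub i3 ((i1 j).const_mul _),
    integral_sub i2 ((i1 i).const_mul _), integral_const_mul, integral_const_mul,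
    integral_const_mul, integral_pdens hS, integral_apply_mul_pdens hS hc h,
    integral_apply_mul_pdens hS hc h] at h1
  linarith

end Estimates

section Conditioning

lemma jointGaussDensity_eq_pdens (mu : Vec d) (my : Vec K)
    (S : Matrix (Fin d ⊕ Fin K) (Fin d ⊕ Fin K) ℝ) (u : Vec d) (y : Vec K) :
    jointGaussDensity mu my S (u, y) = pdens (Sum.elim mu my) S (Sum.elim u y) := by
  have e : Sum.elim (u - mu) (y - my) = Sum.elim u y - Sum.elim mu my := by
    ext i; cases i <;> rfl
  simp [jointGaussDensity, pdens, e]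

lemma measurable_sumElim_left (y : Vec K) : Measurable fun u : Vec d => Sum.elim u y :=
  measurable_pi_lambda _ fun i => by
    cases i
    · exact measurable_pi_apply _
    · exact measurable_const

lemma measurable_sumElim : Measurable fun p : Vec d × Vec K => Sum.elim p.1 p.2 :=
  measurable_pi_lambda _ fun i => by
    cases i
    · exact (measurable_pi_apply _).comp measurable_fst
    · exact (measurable_pi_apply _).comp measurable_snd

lemma gw2_eq (p : Vec d × Vec K) : gw2 p = 1 + ∑ i, Sum.elim p.1 p.2 i ^ 2 := by
  simp [gw2, Fintype.sum_sum_type, add_assoc]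

lemma integral_jointGauss (mu : Vec d) (my : Vec K)
    (S : Matrix (Fin d ⊕ Fin K) (Fin d ⊕ Fin K) ℝ) (f : Vec d × Vec K → ℝ) :
    ∫ p, f p ∂(jointGauss mu my S) =
      ∫ x, f (x ∘ Sum.inl, x ∘ Sum.inr) * pdens (Sum.elim mu my) S x := by
  have hd : ∀ p : Vec d × Vec K,
      jointGaussDensity mu my S p = pdens (Sum.elim mu my) S (Sum.elim p.1 p.2) :=
    fun p => jointGaussDensity_eq_pdens mu my S p.1 p.2
  rw [jointGauss, integral_withDensity_eq_integral_toReal_smul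
    (by simp_rw [hd]; exact ((measurable_pdens _ _).comp measurable_sumElim).ennreal_ofReal)
    (ae_of_all _ fun _ => ENNReal.ofReal_lt_top)]
  rw [← (volume_measurePreserving_sumPiEquivProdPi fun _ : Fin d ⊕ Fin K => ℝ).integral_comp'
    (g := fun p => (ENNReal.ofReal (jointGaussDensity mu my S p)).toReal • f p)]
  refine integral_congr_ae (ae_of_all _ fun x => ?_)
  have e : (MeasurableEquiv.sumPiEquivProdPi fun _ : Fin d ⊕ Fin K => ℝ) x =
      (x ∘ Sum.inl, x ∘ Sum.inr) := rfl
  simp only [e, hd, Sum.elim_comp_inl_inr]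
  rw [ENNReal.toReal_ofReal (pdens_nonneg _ _ _), smul_eq_mul, mul_comm]

lemma dG_nonneg {E : Type*} [MeasurableSpace E] (G : E → ℝ) (μ ν : Measure E) :
    0 ≤ dG G μ ν :=
  Real.iSup_nonneg fun _ => abs_nonneg _

lemma abs_integral_mul_pdens_sub_le_dG {mu mu' : Vec d} {my my' : Vec K}
    {S S' : Matrix (Fin d ⊕ Fin K) (Fin d ⊕ Fin K) ℝ} (hS : S.PosDef) (hS' : S'.PosDef)
    {c : ℝ} (hc : 0 < c) (h : loe S (c • 1)) (h' : loe S' (c • 1))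
    {φ : (Fin d ⊕ Fin K → ℝ) → ℝ} (hφ : Measurable φ) (hb : ∀ x, |φ x| ≤ 1 + ∑ i, x i ^ 2) :
    |(∫ x, φ x * pdens (Sum.elim mu my) S x) - ∫ x, φ x * pdens (Sum.elim mu' my') S' x| ≤
      dG gw2 (jointGauss mu my S) (jointGauss mu' my' S') := by
  have bdd : BddAbove (Set.range fun f : {f : Vec d × Vec K → ℝ //
      Measurable f ∧ ∀ v, |f v| ≤ gw2 v} =>
      |(∫ v, f.1 v ∂(jointGauss mu my S)) - ∫ v, f.1 v ∂(jointGauss mu' my' S')|) := by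
    refine ⟨(∫ x, (1 + ∑ i, x i ^ 2) * pdens (Sum.elim mu my) S x) +
      ∫ x, (1 + ∑ i, x i ^ 2) * pdens (Sum.elim mu' my') S' x, ?_⟩
    rintro _ ⟨⟨f, hf, hfb⟩, rfl⟩
    have key : ∀ (nu : Vec d) (ny : Vec K) (T : Matrix (Fin d ⊕ Fin K) (Fin d ⊕ Fin K) ℝ),
        T.PosDef → loe T (c • 1) → |∫ v, f v ∂(jointGauss nu ny T)| ≤
          ∫ x, (1 + ∑ i, x i ^ 2) * pdens (Sum.elim nu ny) T x := fun nu ny T hT hT' => by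
      rw [integral_jointGauss, ← Real.norm_eq_abs]
      refine norm_integral_le_of_norm_le (integrable_weight_mul_pdens hT hc hT' _)
        (ae_of_all _ fun x => ?_)
      rw [norm_mul, Real.norm_of_nonneg (pdens_nonneg _ _ _)]
      refine mul_le_mul_of_nonneg_right ?_ (pdens_nonneg _ _ _)
      simpa [gw2_eq] using hfb (x ∘ Sum.inl, x ∘ Sum.inr)
    exact (abs_sub _ _).trans (add_le_add (key _ _ _ hS h) (key _ _ _ hS' h'))
  have := le_ciSup bdd ⟨fun p => φ (Sum.elim p.1 p.2), hφ.comp measurable_sumElim, fun p => by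
    rw [gw2_eq]; exact hb _⟩
  simpa only [dG, integral_jointGauss, Sum.elim_comp_inl_inr] using this

/-- Conditioning a Gaussian density does not see its normalising constant. -/
lemma integral_condM_jointGaussDensity (mu : Vec d) (my : Vec K)
    {S : Matrix (Fin d ⊕ Fin K) (Fin d ⊕ Fin K) ℝ} (hS : S.PosDef) (y : Vec K)
    (φ : Vec d → ℝ) :
    let f : Vec d → ℝ := fun u => Real.exp (-(1 / 2) *
      ((Sum.elim u y - Sum.elim mu my) ⬝ᵥ (S⁻¹ *ᵥ (Sum.elim u y - Sum.elim mu my))))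
    ∫ u, φ u ∂(condM (jointGaussDensity mu my S) y) = ∫ u, f u / (∫ v, f v) * φ u := by
  intro f
  set a := (Real.sqrt ((2 * Real.pi) ^ Fintype.card (Fin d ⊕ Fin K) * S.det))⁻¹ with ha
  have ha0 : a ≠ 0 := by
    have := hS.det_pos
    positivity
  have e : ∀ u, jointGaussDensity mu my S (u, y) = a * f u := fun u =>
    jointGaussDensity_eq_pdens mu my S u y
  have e2 : ∀ u, jointGaussDensity mu my S (u, y) / (∫ U, jointGaussDensity mu my S (U, y)) =
      f u / ∫ v, f v := fun u => by
    simp_rw [e, integral_const_mul]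
    exact mul_div_mul_left _ _ ha0
  have hf : Measurable f := (measurable_exp_quad _ S).comp (measurable_sumElim_left y)
  rw [condM]
  simp_rw [e2]
  rw [integral_withDensity_eq_integral_toReal_smul (hf.div_const _).ennreal_ofReal
    (ae_of_all _ fun _ => ENNReal.ofReal_lt_top)]
  refine integral_congr_ae (ae_of_all _ fun u => ?_)
  simp only [smul_eq_mul]
  rw [ENNReal.toReal_ofReal (div_nonneg (Real.exp_nonneg _)
    (integral_nonneg fun _ => Real.exp_nonneg _))]

end Conditioning

section Parameters

variable {mu mu' : Vec d} {my my' : Vec K} {S S' : Matrix (Fin d ⊕ Fin K) (Fin d ⊕ Fin K) ℝ}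

lemma abs_mean_sub_le_dG (hS : S.PosDef) (hS' : S'.PosDef) {c : ℝ} (hc : 0 < c)
    (h : loe S (c • 1)) (h' : loe S' (c • 1)) (i : Fin d ⊕ Fin K) :
    |Sum.elim mu my i - Sum.elim mu' my' i| ≤
      dG gw2 (jointGauss mu my S) (jointGauss mu' my' S') := by
  have := abs_integral_mul_pdens_sub_le_dG (mu := mu) (my := my) (mu' := mu') (my' := my')
    hS hS' hc h h' (measurable_pi_apply i) fun x => abs_apply_le_weight x i
  rwa [integral_apply_mul_pdens hS hc h, integral_apply_mul_pdens hS' hc h'] at this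

lemma abs_cov_sub_le_dG (hS : S.PosDef) (hS' : S'.PosDef) {c R : ℝ} (hc : 0 < c)
    (h : loe S (c • 1)) (h' : loe S' (c • 1)) (hm : ∀ i, |Sum.elim mu my i| ≤ R)
    (hm' : ∀ i, |Sum.elim mu' my' i| ≤ R) (i j : Fin d ⊕ Fin K) :
    |S i j - S' i j| ≤
      (1 + 2 * R) * dG gw2 (jointGauss mu my S) (jointGauss mu' my' S') := by
  have h2 := abs_integral_mul_pdens_sub_le_dG (mu := mu) (my := my) (mu' := mu') (my' := my')
    hS hS' hc h h' (φ := fun x => x i * x j)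
    ((measurable_pi_apply i).mul (measurable_pi_apply j))
    fun x => abs_apply_mul_apply_le_weight x i j
  rw [integral_apply_mul_apply_mul_pdens hS hc h,
    integral_apply_mul_apply_mul_pdens hS' hc h'] at h2
  have hi := abs_mean_sub_le_dG (mu := mu) (my := my) (mu' := mu') (my' := my') hS hS' hc h h' i
  have hj := abs_mean_sub_le_dG (mu := mu) (my := my) (mu' := mu') (my' := my') hS hS' hc h h' j
  set D := dG gw2 (jointGauss mu my S) (jointGauss mu' my' S')
  set m := Sum.elim mu my
  set m' := Sum.elim mu' my'
  have hR : 0 ≤ R := (abs_nonneg _).trans (hm i)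
  have e : S i j - S' i j = (S i j + m i * m j - (S' i j + m' i * m' j)) -
      m i * (m j - m' j) - (m i - m' i) * m' j := by ring
  have t1 : |m i * (m j - m' j)| ≤ R * D := by
    rw [abs_mul]; exact mul_le_mul (hm i) hj (abs_nonneg _) hR
  have t2 : |(m i - m' i) * m' j| ≤ D * R := by
    rw [abs_mul]; exact mul_le_mul hi (hm' j) (abs_nonneg _) ((abs_nonneg _).trans hi)
  rw [e]
  refine (abs_sub _ _).trans ((add_le_add_left (abs_sub _ _) _).trans ?_)
  linarith

end Parameters

/-- **Local Lipschitz continuity of Gaussian conditioning** (Lemma A.12):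
for Gaussians `π, p ∈ 𝒢_R(ℝ^d × ℝ^K)` and `|y†| ≤ κ_y`, `d_g(Bπ, Bp) ≤ C_B d_g(π, p)`. -/
theorem B_locally_lipschitz_gaussians
    (d K : ℕ) (R κy : ℝ) (hR : 1 ≤ R) :
    ∃ C : ℝ, 0 < C ∧
      ∀ ydag : Vec K, enorm ydag ≤ κy →
      ∀ (mu : Vec d) (my : Vec K) (S : Matrix (Fin d ⊕ Fin K) (Fin d ⊕ Fin K) ℝ)
        (mu' : Vec d) (my' : Vec K) (S' : Matrix (Fin d ⊕ Fin K) (Fin d ⊕ Fin K) ℝ),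
        S.PosDef → S'.PosDef →
        enorm (Sum.elim mu my) ≤ R → enorm (Sum.elim mu' my') ≤ R →
        loe ((R ^ 2)⁻¹ • 1) S → loe S (R ^ 2 • 1) →
        loe ((R ^ 2)⁻¹ • 1) S' → loe S' (R ^ 2 • 1) →
        dG gw (condM (jointGaussDensity mu my S) ydag)
            (condM (jointGaussDensity mu' my' S') ydag) ≤
          C * dG gw2 (jointGauss mu my S) (jointGauss mu' my' S') := by
  have hR0 : 0 < R := by linarith
  have hc : 0 < R ^ 2 := by positivity
  have hb : 0 < (R ^ 2)⁻¹ / 4 := by positivity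
  set n : ℝ := (Fintype.card (Fin d ⊕ Fin K) : ℝ)
  set E : Vec d → ℝ := fun u =>
    Real.exp ((R ^ 2)⁻¹ * R ^ 2) * Real.exp (-((R ^ 2)⁻¹ / 4) * ∑ i, u i ^ 2) with hE
  set L : Vec d → ℝ := fun u => Real.exp (-(R ^ 2 * R ^ 2)) *
    (Real.exp (-R ^ 2 * κy ^ 2) * Real.exp (-R ^ 2 * ∑ i, u i ^ 2)) with hL
  have hEint : Integrable fun u : Vec d => gw u ^ 2 * E u := by
    refine ((integrable_one_add_sq_mul_exp hb).const_mul
      (Real.exp ((R ^ 2)⁻¹ * R ^ 2))).congr (ae_of_all _ fun u => ?_)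
    simp only [hE, gw]; ring
  have hLint : Integrable L := by
    have h := integrable_exp_neg_mul_sum_sq (ι := Fin d) hc
    exact (h.const_mul _).const_mul _
  have hz : 0 < ∫ u, L u := by
    simp only [hL, integral_const_mul]
    have := integral_exp_pos (integrable_exp_neg_mul_sum_sq (ι := Fin d) hc)
    positivity
  set I := ∫ u : Vec d, gw u ^ 2 * E u
  set z := ∫ u, L u
  set A := n ^ 2 * ((n ^ 2 * ((R ^ 2) ^ 2 * (1 + 2 * R)) + 2 * R ^ 2) *
    (2 * (1 + κy ^ 2 + R ^ 2))) / 2 with hA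
  have hI0 : 0 ≤ I := integral_nonneg fun u => by simp only [hE]; positivity
  refine ⟨A * (I / z + (I / z) ^ 2) + 1, by positivity, ?_⟩
  intro ydag hy mu my S mu' my' S' hS hS' hm hm' hl hu hl' hu'
  have hyy := sum_sq_le_of_enorm_le hy
  have hmm := sum_sq_le_of_enorm_le hm
  have hmm' := sum_sq_le_of_enorm_le hm'
  set D := dG gw2 (jointGauss mu my S) (jointGauss mu' my' S') with hD
  have hD0 : 0 ≤ D := dG_nonneg _ _ _
  have hsum : ∀ u : Vec d, ∑ i, Sum.elim u ydag i ^ 2 = ∑ i, u i ^ 2 + ∑ i, ydag i ^ 2 :=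
    fun u => by simp [Fintype.sum_sum_type]
  have hu0 : ∀ u : Vec d, 0 ≤ ∑ i, u i ^ 2 := fun u => Finset.sum_nonneg fun _ _ => sq_nonneg _
  have hy0 : 0 ≤ ∑ i, ydag i ^ 2 := Finset.sum_nonneg fun _ _ => sq_nonneg _
  have upper : ∀ (m : Fin d ⊕ Fin K → ℝ) (T : Matrix (Fin d ⊕ Fin K) (Fin d ⊕ Fin K) ℝ),
      T.PosDef → loe T (R ^ 2 • 1) → ∑ i, m i ^ 2 ≤ R ^ 2 → ∀ u : Vec d,
      Real.exp (-(1 / 2) * ((Sum.elim u ydag - m) ⬝ᵥ (T⁻¹ *ᵥ (Sum.elim u ydag - m)))) ≤ E u :=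
    fun m T hT hTu hmT u => by
      refine (exp_quad_le hT hc hTu hmT _).trans ?_
      simp only [hE]
      gcongr ?_ * Real.exp ?_
      rw [hsum]
      nlinarith
  have lower : ∀ (m : Fin d ⊕ Fin K → ℝ) (T : Matrix (Fin d ⊕ Fin K) (Fin d ⊕ Fin K) ℝ),
      T.PosDef → loe ((R ^ 2)⁻¹ • 1) T → ∑ i, m i ^ 2 ≤ R ^ 2 → ∀ u : Vec d,
      L u ≤ Real.exp (-(1 / 2) * ((Sum.elim u ydag - m) ⬝ᵥ (T⁻¹ *ᵥ (Sum.elim u ydag - m)))) :=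
    fun m T hT hTl hmT u => by
      refine le_trans ?_ (le_exp_quad hT hc hTl hmT _)
      simp only [hL]
      rw [← Real.exp_add (-R ^ 2 * κy ^ 2)]
      gcongr ?_ * Real.exp ?_
      rw [hsum]
      nlinarith
  have mass : ∀ (m : Fin d ⊕ Fin K → ℝ) (T : Matrix (Fin d ⊕ Fin K) (Fin d ⊕ Fin K) ℝ),
      T.PosDef → loe ((R ^ 2)⁻¹ • 1) T → loe T (R ^ 2 • 1) → ∑ i, m i ^ 2 ≤ R ^ 2 →
      z ≤ ∫ u : Vec d,
        Real.exp (-(1 / 2) * ((Sum.elim u ydag - m) ⬝ᵥ (T⁻¹ *ᵥ (Sum.elim u ydag - m)))) :=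
    fun m T hT hTl hTu hmT => by
      refine integral_mono hLint ?_ (lower m T hT hTl hmT)
      refine hEint.mono' ((measurable_exp_quad m T).comp
        (measurable_sumElim_left ydag)).aestronglyMeasurable (ae_of_all _ fun u => ?_)
      rw [Real.norm_of_nonneg (Real.exp_nonneg _)]
      refine (upper m T hT hTu hmT u).trans (le_mul_of_one_le_left ?_ ?_)
      · simp only [hE]; positivity
      · exact one_le_pow₀ (by simp only [gw]; linarith [hu0 u])
  have absR : ∀ (m : Fin d ⊕ Fin K → ℝ), ∑ i, m i ^ 2 ≤ R ^ 2 → ∀ i, |m i| ≤ R :=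
    fun m h i => abs_le_of_sq_le_sq ((sq_apply_le_sum_sq m i).trans h) hR0.le
  have hmean := fun i => abs_mean_sub_le_dG (mu := mu) (my := my) (mu' := mu') (my' := my')
    hS hS' hc hu hu' i
  have hprec := fun i j => abs_inv_sub_inv_apply_le hS hS' hc hl hl'
    (abs_cov_sub_le_dG hS hS' hc hu hu' (absR _ hmm) (absR _ hmm')) i j
  have hw : ∀ (m : Fin d ⊕ Fin K → ℝ), ∑ i, m i ^ 2 ≤ R ^ 2 → ∀ (u : Vec d) i,
      (Sum.elim u ydag - m) i ^ 2 ≤ 2 * (1 + κy ^ 2 + R ^ 2) * gw u := fun m h u i => by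
    have h1 := sq_apply_le_sum_sq (Sum.elim u ydag - m) i
    have h2 := sum_sq_sub_le (Sum.elim u ydag) m
    rw [hsum] at h2
    simp only [gw]
    nlinarith [hu0 u, sq_nonneg κy, mul_nonneg (sq_nonneg κy) (hu0 u),
      mul_nonneg hc.le (hu0 u)]
  have hdiff : ∀ u : Vec d,
      |Real.exp (-(1 / 2) * ((Sum.elim u ydag - Sum.elim mu my) ⬝ᵥ
          (S⁻¹ *ᵥ (Sum.elim u ydag - Sum.elim mu my)))) -
        Real.exp (-(1 / 2) * ((Sum.elim u ydag - Sum.elim mu' my') ⬝ᵥ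
          (S'⁻¹ *ᵥ (Sum.elim u ydag - Sum.elim mu' my'))))| ≤ A * D * (gw u * E u) := fun u => by
    refine (abs_exp_sub_exp_le (upper _ S hS hu hmm u) (upper _ S' hS' hu' hmm' u)).trans ?_
    have hG : 1 ≤ 2 * (1 + κy ^ 2 + R ^ 2) * gw u := by
      simp only [gw]
      nlinarith [hu0 u, sq_nonneg κy, mul_nonneg (sq_nonneg κy) (hu0 u),
        mul_nonneg hc.le (hu0 u)]
    have hq := abs_quad_sub_quad_le hG (hw _ hmm u) (hw _ hmm' u) (e := D)
      (fun i => by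
        simp only [Pi.sub_apply, sub_sub_sub_cancel_left]
        rw [abs_sub_comm]; exact hmean i) hprec (abs_inv_apply_le hS' hc hl')
    rw [← mul_sub, abs_mul, ← mul_assoc (A * D)]
    refine mul_le_mul_of_nonneg_right ?_ (by simp only [hE]; positivity)
    rw [abs_neg, abs_of_pos (by norm_num : (0 : ℝ) < 1 / 2)]
    refine (mul_le_mul_of_nonneg_left hq (by norm_num)).trans (le_of_eq ?_)
    rw [hA]; ring
  refine Real.iSup_le ?_ (by positivity)
  rintro ⟨φ, hφ, hφb⟩
  simp only
  rw [integral_condM_jointGaussDensity mu my hS, integral_condM_jointGaussDensity mu' my' hS']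
  refine (abs_integral_normalized_sub_le
    ((measurable_exp_quad _ S).comp (measurable_sumElim_left ydag))
    ((measurable_exp_quad _ S').comp (measurable_sumElim_left ydag)) hφ
    (fun u => by simp only [gw]; linarith [hu0 u])
    (fun u => Real.exp_nonneg _) (fun u => Real.exp_nonneg _) (upper _ S hS hu hmm)
    (upper _ S' hS' hu' hmm') hdiff hφb hEint hz (mass _ S hS hl hu hmm)
    (mass _ S' hS' hl' hu' hmm')).trans ?_
  rw [add_mul, one_mul]
  refine le_add_of_le_of_nonneg (le_of_eq ?_) hD0
  ring

end EnKF
end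
end

section
/- Uniform L∞–L¹ inequality for differences of scaled Gaussian densities: let g(·; m, S) denote the Lebesgue density of N(m, S) on R^K and, for α ≥ 1, let S^K_α be the set of symmetric K×K matrices M with α^{−1} I_K ≼ M ≼ α I_K. Then for every α ≥ 1 there exists L_α > 0 such that for all (c₁, m₁, S₁), (c₂, m₂, S₂) ∈ R × R^K × S^K_α, the function h(y) = c₁ g(y; m₁, S₁) − c₂ g(y; m₂, S₂) satisfies ‖h‖_∞ ≤ L_α ‖h‖₁. -/
open MeasureTheory Matrix
open scoped BigOperators ENNReal

noncomputable section

namespace EnKF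

variable {d K : ℕ}

theorem integral_comp_mulVec {n : ℕ} {B : Matrix (Fin n) (Fin n) ℝ} (hB : B.det ≠ 0)
    (f : (Fin n → ℝ) → ℂ) : ∫ x, f (B *ᵥ x) = (|B.det|⁻¹ : ℝ) * ∫ u, f u := by
  have hemb : MeasurableEmbedding (toLin' B) := by
    have hdet : LinearMap.det (toLin' B) ≠ 0 := by rwa [LinearMap.det_toLin']
    exact ((toLin' B).equivOfDetNeZero
      hdet).toContinuousLinearEquiv.toHomeomorph.measurableEmbedding
  have h := hemb.integral_map (μ := volume) f
  rw [Real.map_matrix_volume_pi_eq_smul_volume_pi hB, integral_smul_measure] at h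
  simp only [toLin'_apply] at h
  rw [← h, ENNReal.toReal_ofReal (abs_nonneg _), abs_inv, Complex.real_smul]

theorem integral_cexp_neg_half_sum_sq_add {n : ℕ} (w : Fin n → ℝ) :
    ∫ u : Fin n → ℝ, Complex.exp (-(1 / 2) * (u ⬝ᵥ u : ℝ) + (w ⬝ᵥ u : ℝ) * Complex.I) =
      (√((2 * Real.pi) ^ n) * Real.exp (-(1 / 2) * (w ⬝ᵥ w)) : ℝ) := by
  have h := GaussianFourier.integral_cexp_neg_mul_sum_add (b := 1 / 2) (by norm_num)
    (fun i : Fin n => (w i : ℂ) * Complex.I)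
  have hpow : ((Real.pi : ℂ) / (1 / 2)) ^ ((Fintype.card (Fin n) : ℂ) / 2) =
      (√((2 * Real.pi) ^ n) : ℝ) := by
    rw [Real.sqrt_eq_rpow, ← Real.rpow_natCast, ← Real.rpow_mul (by positivity),
      Complex.ofReal_cpow (by positivity)]
    push_cast
    simp only [Fintype.card_fin]
    congr 1 <;> ring
  rw [hpow] at h
  convert h using 1
  · congr with u
    simp only [dotProduct, Complex.ofReal_sum, Complex.ofReal_mul, Finset.sum_mul, pow_two]
    congr 2
    exact Finset.sum_congr rfl fun i _ => by ring
  · push_cast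
    simp only [dotProduct, Complex.ofReal_sum, Complex.ofReal_mul, mul_pow, Complex.I_sq,
      Finset.mul_sum, Finset.sum_div]
    congr 2
    exact Finset.sum_congr rfl fun i _ => by ring

theorem integral_cexp_neg_half_quadratic_add {n : ℕ} {A : Matrix (Fin n) (Fin n) ℝ}
    (hA : A.PosDef) (w : Fin n → ℝ) :
    ∫ x : Fin n → ℝ, Complex.exp (-(1 / 2) * (x ⬝ᵥ (A *ᵥ x) : ℝ) + (w ⬝ᵥ x : ℝ) * Complex.I) =
      ((√A.det)⁻¹ * √((2 * Real.pi) ^ n) * Real.exp (-(1 / 2) * (w ⬝ᵥ (A⁻¹ *ᵥ w))) : ℝ) := by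
  obtain ⟨B, hAB⟩ : ∃ B : Matrix (Fin n) (Fin n) ℝ, A = Bᵀ * B := by
    open scoped MatrixOrder in
    simpa [star_eq_conjTranspose] using
      CStarAlgebra.nonneg_iff_eq_star_mul_self.mp (nonneg_iff_posSemidef.mpr hA.posSemidef)
  have hdetA : A.det = B.det ^ 2 := by rw [hAB, det_mul, det_transpose, pow_two]
  have hB : B.det ≠ 0 := by
    intro h
    have := hA.det_pos
    simp [hdetA, h] at this
  have hunit : IsUnit B.det := isUnit_iff_ne_zero.mpr hB
  have hinv : A⁻¹ = B⁻¹ * B⁻¹ᵀ := by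
    rw [hAB, Matrix.mul_inv_rev, transpose_nonsing_inv]
  have h := integral_comp_mulVec hB (fun u => Complex.exp (-(1 / 2) * (u ⬝ᵥ u : ℝ) +
    ((B⁻¹ᵀ *ᵥ w) ⬝ᵥ u : ℝ) * Complex.I))
  rw [integral_cexp_neg_half_sum_sq_add] at h
  have e1 : ∀ x, (B *ᵥ x) ⬝ᵥ (B *ᵥ x) = x ⬝ᵥ (A *ᵥ x) := fun x => by
    rw [hAB, ← mulVec_mulVec, dotProduct_mulVec x, vecMul_transpose]
  have e2 : ∀ x, (B⁻¹ᵀ *ᵥ w) ⬝ᵥ (B *ᵥ x) = w ⬝ᵥ x := fun x => by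
    rw [mulVec_transpose, ← dotProduct_mulVec, mulVec_mulVec, nonsing_inv_mul _ hunit, one_mulVec]
  have e3 : (B⁻¹ᵀ *ᵥ w) ⬝ᵥ (B⁻¹ᵀ *ᵥ w) = w ⬝ᵥ (A⁻¹ *ᵥ w) := by
    rw [hinv, ← mulVec_mulVec, dotProduct_mulVec w, ← mulVec_transpose]
  simp only [e1, e2, e3] at h
  rw [h, hdetA, Real.sqrt_sq_eq_abs]
  push_cast
  ring

/-- Characteristic function of the Gaussian `N(m, S)` on `ℝ^n`. -/
def gaussCharFun {n : ℕ} (m : Vec n) (S : Matrix (Fin n) (Fin n) ℝ) (ξ : Vec n) : ℂ :=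
  Complex.exp (-(1 / 2) * (ξ ⬝ᵥ (S *ᵥ ξ) : ℝ) + (ξ ⬝ᵥ m : ℝ) * Complex.I)

theorem integral_gaussDensity_mul_cexp {n : ℕ} {S : Matrix (Fin n) (Fin n) ℝ} (hS : S.PosDef)
    (m ξ : Vec n) :
    ∫ x, (gaussDensity m S x : ℂ) * Complex.exp ((ξ ⬝ᵥ x : ℝ) * Complex.I) =
      gaussCharFun m S ξ := by
  have hdet := hS.det_pos
  rw [← integral_add_right_eq_self _ m]
  have e : ∀ x : Vec n, (gaussDensity m S (x + m) : ℂ) *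
      Complex.exp ((ξ ⬝ᵥ (x + m) : ℝ) * Complex.I) =
      ((√((2 * Real.pi) ^ n * S.det))⁻¹ : ℝ) * Complex.exp ((ξ ⬝ᵥ m : ℝ) * Complex.I) *
        Complex.exp (-(1 / 2) * (x ⬝ᵥ (S⁻¹ *ᵥ x) : ℝ) + (ξ ⬝ᵥ x : ℝ) * Complex.I) := fun x => by
    simp only [gaussDensity, add_sub_cancel_right, dotProduct_add, Complex.exp_add, add_mul,
      Complex.ofReal_mul, Complex.ofReal_add, Complex.ofReal_exp]
    push_cast
    ring
  simp only [e]
  rw [integral_const_mul, integral_cexp_neg_half_quadratic_add hS.inv, gaussCharFun,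
    nonsing_inv_nonsing_inv _ (isUnit_iff_ne_zero.mpr hdet.ne'), det_nonsing_inv,
    Ring.inverse_eq_inv', Real.sqrt_inv, inv_inv, Real.sqrt_mul (by positivity), Complex.exp_add]
  have h1 : ((√((2 * Real.pi) ^ n) : ℝ) : ℂ) ≠ 0 := by
    exact_mod_cast (Real.sqrt_pos.mpr (by positivity)).ne'
  have h2 : ((√S.det : ℝ) : ℂ) ≠ 0 := by exact_mod_cast (Real.sqrt_pos.mpr hdet).ne'
  push_cast
  field_simp

theorem gaussCharFun_mul_cexp {n : ℕ} (S : Matrix (Fin n) (Fin n) ℝ) (m y ξ : Vec n) :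
    gaussCharFun m S ξ * Complex.exp (-(ξ ⬝ᵥ y : ℝ) * Complex.I) =
      Complex.exp (-(1 / 2) * (ξ ⬝ᵥ (S *ᵥ ξ) : ℝ) + ((m - y) ⬝ᵥ ξ : ℝ) * Complex.I) := by
  rw [gaussCharFun, ← Complex.exp_add, dotProduct_comm (m - y), dotProduct_sub]
  push_cast
  ring_nf

theorem integral_gaussCharFun_mul_cexp {n : ℕ} {S : Matrix (Fin n) (Fin n) ℝ} (hS : S.PosDef)
    (m y : Vec n) :
    ∫ ξ, gaussCharFun m S ξ * Complex.exp (-(ξ ⬝ᵥ y : ℝ) * Complex.I) =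
      ((2 * Real.pi) ^ n * gaussDensity m S y : ℝ) := by
  simp only [gaussCharFun_mul_cexp]
  rw [integral_cexp_neg_half_quadratic_add hS, gaussDensity, ← neg_sub y m, mulVec_neg,
    neg_dotProduct_neg, Real.sqrt_mul (by positivity)]
  congr 1
  have h2 := Real.sq_sqrt (show 0 ≤ (2 * Real.pi) ^ n by positivity)
  have h1 : √((2 * Real.pi) ^ n) ≠ 0 := (Real.sqrt_pos.mpr (by positivity)).ne'
  nth_rewrite 2 [← h2]
  field_simp

theorem integrable_gaussCharFun_mul_cexp {n : ℕ} {S : Matrix (Fin n) (Fin n) ℝ} (hS : S.PosDef)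
    (m y : Vec n) :
    Integrable fun ξ => gaussCharFun m S ξ * Complex.exp (-(ξ ⬝ᵥ y : ℝ) * Complex.I) := by
  refine Integrable.of_integral_ne_zero ?_
  rw [integral_gaussCharFun_mul_cexp hS, Complex.ofReal_ne_zero, gaussDensity]
  have := hS.det_pos
  positivity

theorem norm_pow_sub_pow_le_mul {z w : ℂ} (hz : ‖z‖ ≤ 1) (hw : ‖w‖ ≤ 1) (n : ℕ) :
    ‖z ^ n - w ^ n‖ ≤ n * ‖z - w‖ := by
  induction n with
  | zero => simp
  | succ n ih =>
    have e : z ^ (n + 1) - w ^ (n + 1) = z ^ n * (z - w) + (z ^ n - w ^ n) * w := by ring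
    have hzn : ‖z ^ n‖ ≤ 1 := by rw [norm_pow]; exact pow_le_one₀ (norm_nonneg _) hz
    calc ‖z ^ (n + 1) - w ^ (n + 1)‖ ≤ ‖z ^ n‖ * ‖z - w‖ + ‖z ^ n - w ^ n‖ * ‖w‖ := by
          rw [e, ← norm_mul, ← norm_mul]; exact norm_add_le _ _
      _ ≤ 1 * ‖z - w‖ + (n * ‖z - w‖) * 1 := by gcongr
      _ = (n + 1 : ℕ) * ‖z - w‖ := by push_cast; ring

theorem abs_sub_le_exp_mul_abs_exp_neg_sub {a b M : ℝ} (ha : a ≤ M) (hb : b ≤ M) :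
    |a - b| ≤ Real.exp M * |Real.exp (-a) - Real.exp (-b)| := by
  wlog hab : a ≤ b generalizing a b
  · rw [abs_sub_comm a, abs_sub_comm (Real.exp (-a))]
    exact this hb ha (le_of_not_ge hab)
  have h1 : Real.exp (-b) ≤ Real.exp (-a) := Real.exp_le_exp.mpr (by linarith)
  have h2 : Real.exp (-a) = Real.exp (-b) * Real.exp (b - a) := by
    rw [← Real.exp_add]; ring_nf
  have h3 := Real.add_one_le_exp (b - a)
  have h4 : 1 ≤ Real.exp M * Real.exp (-b) := by
    rw [← Real.exp_add]; exact Real.one_le_exp (by linarith)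
  rw [abs_sub_comm, abs_of_nonneg (by linarith), abs_of_nonneg (by linarith), h2]
  nlinarith

theorem abs_exp_neg_sub_le {a b l : ℝ} (ha : l ≤ a) (hb : l ≤ b) :
    |Real.exp (-a) - Real.exp (-b)| ≤ Real.exp (-l) * |a - b| := by
  wlog hab : a ≤ b generalizing a b
  · rw [abs_sub_comm a, abs_sub_comm (Real.exp (-a))]
    exact this hb ha (le_of_not_ge hab)
  have h1 : Real.exp (-b) ≤ Real.exp (-a) := Real.exp_le_exp.mpr (by linarith)
  have h2 : Real.exp (-b) = Real.exp (-a) * Real.exp (a - b) := by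
    rw [← Real.exp_add]; ring_nf
  have h3 := Real.add_one_le_exp (a - b)
  have h4 : Real.exp (-a) ≤ Real.exp (-l) := Real.exp_le_exp.mpr (by linarith)
  rw [abs_of_nonneg (by linarith), abs_sub_comm, abs_of_nonneg (by linarith), h2]
  nlinarith [Real.exp_pos (-a)]

theorem norm_cexp_dilate_sub_le {a b s t M l : ℝ} {n : ℕ} (hn : 1 ≤ n) (ha : a ≤ M) (hb : b ≤ M)
    (hla : l ≤ n ^ 2 * a) (hlb : l ≤ n ^ 2 * b) :
    ‖Complex.exp (-(n ^ 2 * a : ℝ) + (n * s : ℝ) * Complex.I) -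
        Complex.exp (-(n ^ 2 * b : ℝ) + (n * t : ℝ) * Complex.I)‖ ≤
      3 * n ^ 2 * Real.exp M * Real.exp (-l) *
        ‖Complex.exp (-(a : ℝ) + s * Complex.I) - Complex.exp (-(b : ℝ) + t * Complex.I)‖ := by
  have split : ∀ a b s t : ℝ, Complex.exp (-(a : ℝ) + s * Complex.I) -
      Complex.exp (-(b : ℝ) + t * Complex.I) =
      (Real.exp (-a) : ℝ) * (Complex.exp (s * Complex.I) - Complex.exp (t * Complex.I)) +
        (Real.exp (-a) - Real.exp (-b) : ℝ) * Complex.exp (t * Complex.I) := fun a b s t => by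
    simp only [Complex.exp_add]
    push_cast
    ring
  set Δ := ‖Complex.exp (-(a : ℝ) + s * Complex.I) - Complex.exp (-(b : ℝ) + t * Complex.I)‖
    with hΔ
  have hmod : |Real.exp (-a) - Real.exp (-b)| ≤ Δ := by
    have h := abs_norm_sub_norm_le (Complex.exp (-(a : ℝ) + s * Complex.I))
      (Complex.exp (-(b : ℝ) + t * Complex.I))
    simpa [Complex.norm_exp] using h
  have hphase : ‖Complex.exp (s * Complex.I) - Complex.exp (t * Complex.I)‖ ≤
      Real.exp M * (2 * Δ) := by
    have h1 : Real.exp (-a) * ‖Complex.exp (s * Complex.I) - Complex.exp (t * Complex.I)‖ ≤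
        2 * Δ := by
      have h := norm_sub_le (Complex.exp (-(a : ℝ) + s * Complex.I) -
        Complex.exp (-(b : ℝ) + t * Complex.I))
        ((Real.exp (-a) - Real.exp (-b) : ℝ) * Complex.exp (t * Complex.I))
      rw [← hΔ, split, add_sub_cancel_right, norm_mul, norm_mul, Complex.norm_real,
        Complex.norm_real, Complex.norm_exp_ofReal_mul_I, mul_one, Real.norm_eq_abs,
        Real.norm_eq_abs, abs_of_pos (Real.exp_pos _)] at h
      linarith
    calc ‖Complex.exp (s * Complex.I) - Complex.exp (t * Complex.I)‖
        = Real.exp a * (Real.exp (-a) *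
            ‖Complex.exp (s * Complex.I) - Complex.exp (t * Complex.I)‖) := by
          rw [← mul_assoc, ← Real.exp_add]; simp
      _ ≤ Real.exp M * (2 * Δ) := by gcongr
  have hpow : ∀ r : ℝ, Complex.exp ((n * r : ℝ) * Complex.I) =
      Complex.exp (r * Complex.I) ^ n := fun r => by
    rw [← Complex.exp_nat_mul]; push_cast; ring_nf
  have hphase_n : ‖Complex.exp ((n * s : ℝ) * Complex.I) - Complex.exp ((n * t : ℝ) * Complex.I)‖ ≤
      n * (Real.exp M * (2 * Δ)) := by
    rw [hpow, hpow]
    refine (norm_pow_sub_pow_le_mul (Complex.norm_exp_ofReal_mul_I s).le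
      (Complex.norm_exp_ofReal_mul_I t).le n).trans ?_
    gcongr
  have hmod_n : |Real.exp (-(n ^ 2 * a)) - Real.exp (-(n ^ 2 * b))| ≤
      Real.exp (-l) * (n ^ 2 * (Real.exp M * Δ)) := by
    refine (abs_exp_neg_sub_le hla hlb).trans ?_
    rw [← mul_sub, abs_mul, abs_of_nonneg (by positivity : (0 : ℝ) ≤ n ^ 2)]
    gcongr
    exact (abs_sub_le_exp_mul_abs_exp_neg_sub ha hb).trans (by gcongr)
  have hn' : (1 : ℝ) ≤ n := by exact_mod_cast hn
  have hnn : (n : ℝ) ≤ n ^ 2 := by nlinarith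
  have hΔ0 : 0 ≤ Δ := norm_nonneg _
  rw [split]
  refine (norm_add_le _ _).trans ?_
  rw [norm_mul, norm_mul, Complex.norm_real, Complex.norm_real, Complex.norm_exp_ofReal_mul_I,
    mul_one, Real.norm_eq_abs, Real.norm_eq_abs, abs_of_pos (Real.exp_pos _)]
  calc _ ≤ Real.exp (-l) * (n ^ 2 * (Real.exp M * (2 * Δ))) +
        Real.exp (-l) * (n ^ 2 * (Real.exp M * Δ)) := by
        refine add_le_add ?_ hmod_n
        refine mul_le_mul (Real.exp_le_exp.mpr (by linarith)) (hphase_n.trans ?_)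
          (norm_nonneg _) (Real.exp_pos _).le
        gcongr
    _ = _ := by ring

theorem gaussCharFun_smul {n : ℕ} (m : Vec n) (S : Matrix (Fin n) (Fin n) ℝ) (ξ : Vec n) (r : ℝ) :
    gaussCharFun m S (r • ξ) = Complex.exp (-(r ^ 2 * (1 / 2 * (ξ ⬝ᵥ (S *ᵥ ξ))) : ℝ) +
      (r * (ξ ⬝ᵥ m) : ℝ) * Complex.I) := by
  simp only [gaussCharFun, mulVec_smul, smul_dotProduct, dotProduct_smul, smul_eq_mul]
  push_cast
  ring_nf

theorem norm_gaussCharFun {n : ℕ} (m : Vec n) (S : Matrix (Fin n) (Fin n) ℝ) (ξ : Vec n) :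
    ‖gaussCharFun m S ξ‖ = Real.exp (-(1 / 2) * (ξ ⬝ᵥ (S *ᵥ ξ))) := by
  simp [gaussCharFun, Complex.norm_exp]

/-- Decay of a difference of scaled Gaussian characteristic functions in terms of its supremum. -/
theorem norm_gaussCharFun_sub_le {n : ℕ} {α δ c₁ c₂ : ℝ} (hα : 1 ≤ α) {m₁ m₂ : Vec n}
    {S₁ S₂ : Matrix (Fin n) (Fin n) ℝ}
    (hl₁ : ∀ ξ : Vec n, α⁻¹ * (ξ ⬝ᵥ ξ) ≤ ξ ⬝ᵥ (S₁ *ᵥ ξ))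
    (hu₁ : ∀ ξ : Vec n, ξ ⬝ᵥ (S₁ *ᵥ ξ) ≤ α * (ξ ⬝ᵥ ξ))
    (hl₂ : ∀ ξ : Vec n, α⁻¹ * (ξ ⬝ᵥ ξ) ≤ ξ ⬝ᵥ (S₂ *ᵥ ξ))
    (hu₂ : ∀ ξ : Vec n, ξ ⬝ᵥ (S₂ *ᵥ ξ) ≤ α * (ξ ⬝ᵥ ξ))
    (hδ : ∀ ξ, ‖c₁ * gaussCharFun m₁ S₁ ξ - c₂ * gaussCharFun m₂ S₂ ξ‖ ≤ δ) (ξ : Vec n) :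
    ‖c₁ * gaussCharFun m₁ S₁ ξ - c₂ * gaussCharFun m₂ S₂ ξ‖ ≤
      385 * α ^ 2 * Real.exp (α / 2) * δ * Real.exp (-(4 * α)⁻¹ * (ξ ⬝ᵥ ξ)) := by
  have hα0 : 0 < α := by linarith
  have hq (η : Vec n) : 0 ≤ η ⬝ᵥ η := by
    simpa [dotProduct] using Finset.sum_nonneg fun i _ => mul_self_nonneg (η i)
  have hc : |c₁ - c₂| ≤ δ := by
    have h := hδ 0
    simp only [gaussCharFun, zero_dotProduct, Complex.ofReal_zero, zero_mul, mul_zero, add_zero,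
      Complex.exp_zero, mul_one] at h
    rwa [← Complex.ofReal_sub, Complex.norm_real] at h
  have hδ0 : 0 ≤ δ := (abs_nonneg _).trans hc
  have hφ₂ (η : Vec n) : ‖gaussCharFun m₂ S₂ η‖ ≤ Real.exp (-(2 * α)⁻¹ * (η ⬝ᵥ η)) := by
    rw [norm_gaussCharFun, Real.exp_le_exp]
    have := hl₂ η
    rw [mul_inv]
    linarith
  have hdiff (η : Vec n) : |c₁| * ‖gaussCharFun m₁ S₁ η - gaussCharFun m₂ S₂ η‖ ≤ 2 * δ := by
    have e : (c₁ : ℂ) * (gaussCharFun m₁ S₁ η - gaussCharFun m₂ S₂ η) =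
        (c₁ * gaussCharFun m₁ S₁ η - c₂ * gaussCharFun m₂ S₂ η) -
          (c₁ - c₂ : ℝ) * gaussCharFun m₂ S₂ η := by push_cast; ring
    have h1 : ‖gaussCharFun m₂ S₂ η‖ ≤ 1 :=
      (hφ₂ η).trans (Real.exp_le_one_iff.mpr
        (by have := mul_nonneg (inv_nonneg.mpr (by linarith : 0 ≤ 2 * α)) (hq η); linarith))
    calc |c₁| * ‖gaussCharFun m₁ S₁ η - gaussCharFun m₂ S₂ η‖
        = ‖(c₁ : ℂ) * (gaussCharFun m₁ S₁ η - gaussCharFun m₂ S₂ η)‖ := by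
          rw [norm_mul, Complex.norm_real, Real.norm_eq_abs]
      _ ≤ δ + |c₁ - c₂| * ‖gaussCharFun m₂ S₂ η‖ := by
          rw [e]
          refine (norm_sub_le _ _).trans (add_le_add (hδ η) ?_)
          rw [norm_mul, Complex.norm_real, Real.norm_eq_abs]
      _ ≤ δ + δ * 1 := by gcongr
      _ = 2 * δ := by ring
  set q := ξ ⬝ᵥ ξ with hq_def
  have hq0 : 0 ≤ q := hq ξ
  set N : ℕ := ⌈q⌉₊ + 1 with hN
  have hN1 : (1 : ℝ) ≤ N := by simp [hN]
  have hqN : q ≤ N := (Nat.le_ceil q).trans (by simp [hN])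
  have hNq : (N : ℝ) ≤ q + 2 := by
    have := (Nat.ceil_lt_add_one hq0).le
    push_cast [hN]
    linarith
  have hξ : ξ = (N : ℝ) • ((N : ℝ)⁻¹ • ξ) := by
    rw [smul_smul, mul_inv_cancel₀ (by positivity), one_smul]
  set η : Vec n := (N : ℝ)⁻¹ • ξ with hη
  have hqη : q = N ^ 2 * (η ⬝ᵥ η) := by
    rw [hq_def, hξ]
    simp only [smul_dotProduct, dotProduct_smul, smul_eq_mul]
    ring
  have hη1 : η ⬝ᵥ η ≤ 1 := by
    have : (N : ℝ) ^ 2 * (η ⬝ᵥ η) ≤ N ^ 2 * 1 := by rw [← hqη]; nlinarith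
    exact le_of_mul_le_mul_left this (by positivity)
  have hαη : α * (η ⬝ᵥ η) ≤ α := by nlinarith
  have hlow {x : ℝ} (h : α⁻¹ * (η ⬝ᵥ η) ≤ x) : (2 * α)⁻¹ * q ≤ (N : ℝ) ^ 2 * (1 / 2 * x) := by
    rw [hqη, mul_inv]
    have := mul_le_mul_of_nonneg_left h (sq_nonneg (N : ℝ))
    linarith
  have hmain := norm_cexp_dilate_sub_le (n := N) (s := η ⬝ᵥ m₁) (t := η ⬝ᵥ m₂)
    (M := α / 2) (by simp [hN])
    (by linarith [hu₁ η] : 1 / 2 * (η ⬝ᵥ (S₁ *ᵥ η)) ≤ α / 2)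
    (by linarith [hu₂ η] : 1 / 2 * (η ⬝ᵥ (S₂ *ᵥ η)) ≤ α / 2) (hlow (hl₁ η)) (hlow (hl₂ η))
  have hone (m : Vec n) (S : Matrix (Fin n) (Fin n) ℝ) := gaussCharFun_smul m S η 1
  simp only [one_smul, one_pow, one_mul] at hone
  rw [← gaussCharFun_smul, ← gaussCharFun_smul, ← hone, ← hone, ← hξ] at hmain
  have hpoly : (N : ℝ) ^ 2 ≤ 64 * α ^ 2 * Real.exp ((4 * α)⁻¹ * q) := by
    have h1 : q + 2 ≤ 8 * α * Real.exp ((8 * α)⁻¹ * q) := by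
      have h := Real.add_one_le_exp ((8 * α)⁻¹ * q)
      calc q + 2 ≤ 8 * α * ((8 * α)⁻¹ * q + 1) := by
            rw [mul_add, mul_inv_cancel_left₀ (by positivity)]; linarith
        _ ≤ _ := by gcongr
    calc (N : ℝ) ^ 2 ≤ (8 * α * Real.exp ((8 * α)⁻¹ * q)) ^ 2 := by
          gcongr; exact hNq.trans h1
      _ = _ := by
          rw [mul_pow, ← Real.exp_nat_mul]
          congr 2
          · ring
          · push_cast; field_simp; ring
  have hexp : Real.exp ((4 * α)⁻¹ * q) * Real.exp (-((2 * α)⁻¹ * q)) =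
      Real.exp (-(4 * α)⁻¹ * q) := by
    rw [← Real.exp_add]; congr 1; field_simp; ring
  have hexp_le : Real.exp (-(2 * α)⁻¹ * q) ≤ Real.exp (-(4 * α)⁻¹ * q) := by
    rw [Real.exp_le_exp, neg_mul, neg_mul, neg_le_neg_iff]
    gcongr
    norm_num
  have hconst : 1 ≤ α ^ 2 * Real.exp (α / 2) :=
    one_le_mul_of_one_le_of_one_le (one_le_pow₀ hα) (Real.one_le_exp (by positivity))
  have e : (c₁ : ℂ) * gaussCharFun m₁ S₁ ξ - c₂ * gaussCharFun m₂ S₂ ξ =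
      c₁ * (gaussCharFun m₁ S₁ ξ - gaussCharFun m₂ S₂ ξ) +
        (c₁ - c₂ : ℝ) * gaussCharFun m₂ S₂ ξ := by push_cast; ring
  calc ‖c₁ * gaussCharFun m₁ S₁ ξ - c₂ * gaussCharFun m₂ S₂ ξ‖
      ≤ |c₁| * ‖gaussCharFun m₁ S₁ ξ - gaussCharFun m₂ S₂ ξ‖ +
          |c₁ - c₂| * ‖gaussCharFun m₂ S₂ ξ‖ := by
        rw [e]
        refine (norm_add_le _ _).trans_eq ?_
        rw [norm_mul, norm_mul, Complex.norm_real, Complex.norm_real, Real.norm_eq_abs,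
          Real.norm_eq_abs]
    _ ≤ |c₁| * (3 * (64 * α ^ 2 * Real.exp ((4 * α)⁻¹ * q)) * Real.exp (α / 2) *
          Real.exp (-((2 * α)⁻¹ * q)) * ‖gaussCharFun m₁ S₁ η - gaussCharFun m₂ S₂ η‖) +
          δ * Real.exp (-(4 * α)⁻¹ * q) := by
        refine add_le_add (mul_le_mul_of_nonneg_left (hmain.trans ?_) (abs_nonneg _))
          (mul_le_mul hc ((hφ₂ ξ).trans hexp_le) (norm_nonneg _) hδ0)
        gcongr
    _ = 192 * α ^ 2 * Real.exp (α / 2) * (Real.exp ((4 * α)⁻¹ * q) * Real.exp (-((2 * α)⁻¹ * q))) *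
          (|c₁| * ‖gaussCharFun m₁ S₁ η - gaussCharFun m₂ S₂ η‖) +
          1 * (δ * Real.exp (-(4 * α)⁻¹ * q)) := by ring
    _ ≤ 192 * α ^ 2 * Real.exp (α / 2) * Real.exp (-(4 * α)⁻¹ * q) * (2 * δ) +
          (α ^ 2 * Real.exp (α / 2)) * (δ * Real.exp (-(4 * α)⁻¹ * q)) := by
        rw [hexp]
        exact add_le_add (mul_le_mul_of_nonneg_left (hdiff η) (by positivity))
          (mul_le_mul_of_nonneg_right hconst (by positivity))
    _ = _ := by ring

theorem loe.smul_one_dotProduct_le {n : ℕ} {r : ℝ} {S : Matrix (Fin n) (Fin n) ℝ}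
    (h : loe (r • 1) S) (ξ : Vec n) : r * (ξ ⬝ᵥ ξ) ≤ ξ ⬝ᵥ (S *ᵥ ξ) := by
  have := h.dotProduct_mulVec_nonneg ξ
  simpa [sub_mulVec, smul_mulVec, dotProduct_sub] using this

theorem loe.dotProduct_le_smul_one {n : ℕ} {r : ℝ} {S : Matrix (Fin n) (Fin n) ℝ}
    (h : loe S (r • 1)) (ξ : Vec n) : ξ ⬝ᵥ (S *ᵥ ξ) ≤ r * (ξ ⬝ᵥ ξ) := by
  have := h.dotProduct_mulVec_nonneg ξ
  simpa [sub_mulVec, smul_mulVec, dotProduct_sub] using this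

theorem loe.posDef {n : ℕ} {r : ℝ} (hr : 0 < r) {S : Matrix (Fin n) (Fin n) ℝ}
    (h : loe (r • 1) S) : S.PosDef := by
  have h1 : (r • (1 : Matrix (Fin n) (Fin n) ℝ)).PosDef := PosDef.one.smul hr
  simpa using h1.add_posSemidef h

theorem integrable_exp_neg_mul_dotProduct_self (n : ℕ) {b : ℝ} (hb : 0 < b) :
    Integrable fun ξ : Vec n => Real.exp (-b * (ξ ⬝ᵥ ξ)) := by
  have h := (GaussianFourier.integrable_cexp_neg_mul_sum_add (b := (b : ℂ)) (by simpa using hb)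
    (0 : Fin n → ℂ)).norm
  refine h.congr (Filter.Eventually.of_forall fun ξ => ?_)
  simp [Complex.norm_exp, dotProduct, pow_two]

theorem norm_gaussCharFun_sub_le_integral {n : ℕ} {c₁ c₂ : ℝ} {m₁ m₂ : Vec n}
    {S₁ S₂ : Matrix (Fin n) (Fin n) ℝ} (hS₁ : S₁.PosDef) (hS₂ : S₂.PosDef) (ξ : Vec n) :
    ‖c₁ * gaussCharFun m₁ S₁ ξ - c₂ * gaussCharFun m₂ S₂ ξ‖ ≤
      ∫ z, |c₁ * gaussDensity m₁ S₁ z - c₂ * gaussDensity m₂ S₂ z| := by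
  have hint {m : Vec n} {S : Matrix (Fin n) (Fin n) ℝ} (hS : S.PosDef) (c : ℝ) :
      Integrable fun x => (c : ℂ) * ((gaussDensity m S x : ℂ) *
        Complex.exp ((ξ ⬝ᵥ x : ℝ) * Complex.I)) := by
    refine (Integrable.of_integral_ne_zero ?_).const_mul _
    rw [integral_gaussDensity_mul_cexp hS]
    exact Complex.exp_ne_zero _
  rw [← integral_gaussDensity_mul_cexp hS₁, ← integral_gaussDensity_mul_cexp hS₂,
    ← integral_const_mul, ← integral_const_mul, ← integral_sub (hint hS₁ c₁) (hint hS₂ c₂)]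
  refine (norm_integral_le_integral_norm _).trans_eq ?_
  congr with z
  rw [← mul_assoc, ← mul_assoc, ← sub_mul, norm_mul, Complex.norm_exp_ofReal_mul_I, mul_one,
    ← Complex.ofReal_mul, ← Complex.ofReal_mul, ← Complex.ofReal_sub, Complex.norm_real,
    Real.norm_eq_abs]

/-- **Uniform L∞–L¹ inequality for differences of scaled Gaussian densities** (Lemma B.2). -/
theorem linf_l1_gaussian_differences
    (K : ℕ) (α : ℝ) (hα : 1 ≤ α) :
    ∃ L : ℝ, 0 < L ∧
      ∀ (c₁ c₂ : ℝ) (m₁ m₂ : Vec K) (S₁ S₂ : Matrix (Fin K) (Fin K) ℝ),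
        S₁.IsSymm → S₂.IsSymm →
        loe (α⁻¹ • 1) S₁ → loe S₁ (α • 1) →
        loe (α⁻¹ • 1) S₂ → loe S₂ (α • 1) →
        ∀ y : Vec K,
          |c₁ * gaussDensity m₁ S₁ y - c₂ * gaussDensity m₂ S₂ y| ≤
            L * ∫ z, |c₁ * gaussDensity m₁ S₁ z - c₂ * gaussDensity m₂ S₂ z| := by
  have hα0 : 0 < α := by linarith
  set J : ℝ := ∫ ξ : Vec K, Real.exp (-(4 * α)⁻¹ * (ξ ⬝ᵥ ξ)) with hJ
  have hJ0 : 0 ≤ J := integral_nonneg fun _ => (Real.exp_pos _).le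
  refine ⟨385 * α ^ 2 * Real.exp (α / 2) * (J + 1), by positivity, ?_⟩
  intro c₁ c₂ m₁ m₂ S₁ S₂ _ _ hl₁ hu₁ hl₂ hu₂ y
  have hS₁ := hl₁.posDef (inv_pos.mpr hα0)
  have hS₂ := hl₂.posDef (inv_pos.mpr hα0)
  set δ := ∫ z, |c₁ * gaussDensity m₁ S₁ z - c₂ * gaussDensity m₂ S₂ z| with hδ
  have hδ0 : 0 ≤ δ := integral_nonneg fun _ => abs_nonneg _
  have hbound := norm_gaussCharFun_sub_le hα hl₁.smul_one_dotProduct_le hu₁.dotProduct_le_smul_one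
    hl₂.smul_one_dotProduct_le hu₂.dotProduct_le_smul_one
    (norm_gaussCharFun_sub_le_integral (c₁ := c₁) (c₂ := c₂) (m₁ := m₁) (m₂ := m₂) hS₁ hS₂)
  have hinv : (((2 * Real.pi) ^ K * (c₁ * gaussDensity m₁ S₁ y - c₂ * gaussDensity m₂ S₂ y) : ℝ)
      : ℂ) = ∫ ξ, (c₁ * gaussCharFun m₁ S₁ ξ - c₂ * gaussCharFun m₂ S₂ ξ) *
        Complex.exp (-(ξ ⬝ᵥ y : ℝ) * Complex.I) := by
    simp only [sub_mul, mul_assoc]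
    rw [integral_sub ((integrable_gaussCharFun_mul_cexp hS₁ m₁ y).const_mul _)
        ((integrable_gaussCharFun_mul_cexp hS₂ m₂ y).const_mul _),
      integral_const_mul, integral_const_mul, integral_gaussCharFun_mul_cexp hS₁,
      integral_gaussCharFun_mul_cexp hS₂]
    push_cast
    ring
  have hpi : 1 ≤ (2 * Real.pi) ^ K := one_le_pow₀ (by linarith [Real.pi_gt_three])
  calc |c₁ * gaussDensity m₁ S₁ y - c₂ * gaussDensity m₂ S₂ y|
      ≤ (2 * Real.pi) ^ K * |c₁ * gaussDensity m₁ S₁ y - c₂ * gaussDensity m₂ S₂ y| :=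
        le_mul_of_one_le_left (abs_nonneg _) hpi
    _ = ‖∫ ξ, (c₁ * gaussCharFun m₁ S₁ ξ - c₂ * gaussCharFun m₂ S₂ ξ) *
        Complex.exp (-(ξ ⬝ᵥ y : ℝ) * Complex.I)‖ := by
        rw [← hinv, Complex.norm_real, Real.norm_eq_abs, abs_mul,
          abs_of_nonneg (by positivity : 0 ≤ (2 * Real.pi) ^ K)]
    _ ≤ ∫ ξ : Vec K, 385 * α ^ 2 * Real.exp (α / 2) * δ * Real.exp (-(4 * α)⁻¹ * (ξ ⬝ᵥ ξ)) := by
        refine norm_integral_le_of_norm_le ((integrable_exp_neg_mul_dotProduct_self K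
          (by positivity)).const_mul _) (Filter.Eventually.of_forall fun ξ => ?_)
        rw [norm_mul, ← Complex.ofReal_neg, Complex.norm_exp_ofReal_mul_I, mul_one]
        exact hbound ξ
    _ = 385 * α ^ 2 * Real.exp (α / 2) * δ * J := by rw [integral_const_mul]
    _ ≤ 385 * α ^ 2 * Real.exp (α / 2) * δ * (J + 1) := by gcongr; linarith
    _ = _ := by ring

end EnKF
end
end

section
/- For every real u ≥ 0 (with the convention 0·log 0 = 0), it holds that u log u ≥ (u − 1) + (u − 1)²/(2 max{1, u}). -/
open MeasureTheory Matrix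
open scoped BigOperators ENNReal

noncomputable section

namespace EnKF

variable {d K : ℕ}

/-- Second-order upper bound for `log` on `(0, 1]`. -/
theorem log_le_quadratic {s : ℝ} (hs : 0 < s) (hs1 : s ≤ 1) :
    Real.log s ≤ -((1 - s) * (3 - s) / 2) := by
  have hderiv (x : ℝ) (hx : 0 < x) :
      HasDerivAt (fun x : ℝ => Real.log x + (1 - x) * (3 - x) / 2) (x⁻¹ + (x - 2)) x := by
    have h := (Real.hasDerivAt_log hx.ne').add
      ((((hasDerivAt_id x).const_sub 1).mul ((hasDerivAt_id x).const_sub 3)).div_const 2)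
    refine h.congr_deriv ?_
    simp only [id]
    ring
  have hmono : MonotoneOn (fun x : ℝ => Real.log x + (1 - x) * (3 - x) / 2) (Set.Ioi 0) := by
    refine monotoneOn_of_hasDerivWithinAt_nonneg (convex_Ioi 0)
      (fun x hx => (hderiv x hx).continuousAt.continuousWithinAt)
      (fun x hx => (hderiv x (interior_subset hx)).hasDerivWithinAt) fun x hx => ?_
    have hx0 : (0 : ℝ) < x := interior_subset hx
    have h : x⁻¹ + (x - 2) = (x - 1) ^ 2 / x := by
      field_simp
      ring
    rw [h]
    positivity
  have h := hmono hs (Set.mem_Ioi.2 one_pos) hs1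
  norm_num at h
  linarith

/-- **Taylor lower bound for `u log u`** (used in the weighted Pinsker inequality):
for all `u ≥ 0`, `u log u ≥ (u − 1) + (u − 1)² / (2 max{1, u})`
(with the convention `0 · log 0 = 0`, which holds definitionally since `Real.log 0 = 0`). -/
theorem mul_log_ge_taylor (u : ℝ) (hu : 0 ≤ u) :
    (u - 1) + (u - 1) ^ 2 / (2 * max 1 u) ≤ u * Real.log u := by
  rcases hu.eq_or_lt with rfl | hu0
  · norm_num
  rcases le_total u 1 with h1 | h1
  · have h := Real.sinh_le_self_iff.2 (Real.log_nonpos hu h1)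
    rw [Real.sinh_log hu0] at h
    have h' := mul_le_mul_of_nonneg_left h hu
    have e : u * ((u - u⁻¹) / 2) = (u - 1) + (u - 1) ^ 2 / 2 := by
      field_simp
      ring
    rw [max_eq_left h1, mul_one]
    linarith
  · have h := log_le_quadratic (inv_pos.2 hu0) (inv_le_one_of_one_le₀ h1)
    rw [Real.log_inv] at h
    have h' := mul_le_mul_of_nonneg_left (neg_le_neg_iff.1 h) hu
    have e : u * ((1 - u⁻¹) * (3 - u⁻¹) / 2) = (u - 1) + (u - 1) ^ 2 / (2 * u) := by
      field_simp
      ring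
    rw [max_eq_right h1]
    linarith

end EnKF
end
end
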